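/- Let q > 2 and let u : ℝ/ℤ → ℝⁿ be an embedded, regular C¹ curve with bil(u) < ∞ and ‖u'‖_{W^{1-1/q,q}} < ∞, and let v, w : ℝ/ℤ → ℝⁿ be C¹ with ‖v'‖_{W^{1-1/q,q}}, ‖w'‖_{W^{1-1/q,q}} < ∞. Then the mixed second partial derivative δ²TP(u)[v,w] = ∂²/∂s∂t TP(u + s v + t w) at (s,t) = (0,0) exists, and there is a constant C > 0 depending only on n and q such that |δ²TP(u)[v,w]| ≤ C · (bil u)^{2q+4} · ‖u'‖_{L^∞}^{q+2} · ‖u'‖_{W^{1-1/q,q}}^q · ‖v'‖_{W^{1-1/q,q}} · ‖w'‖_{W^{1-1/q,q}}. -/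

import Mathlib

open MeasureTheory Set Filter
open scoped RealInnerProductSpace ENNReal Topology

noncomputable section

/-- The distance on the circle `ℝ/ℤ` between the points represented by `x` and `y`. -/
def circDist (x y : ℝ) : ℝ := ‖((x - y : ℝ) : AddCircle (1 : ℝ))‖

/-- The representative of `z` modulo `1` lying in `(-1/2, 1/2]`. -/
def wrap (z : ℝ) : ℝ := 1 / 2 - Int.fract (1 / 2 - z)

/-- Squared wedge norm `|a ∧ b|² = |a|²|b|² - ⟨a,b⟩²`. -/
def wedgeSq {n : ℕ} (a b : EuclideanSpace ℝ (Fin n)) : ℝ :=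
  ‖a‖ ^ 2 * ‖b‖ ^ 2 - ⟪a, b⟫ ^ 2

/-- Wedge inner product `⟨a∧b, c∧d⟩ = ⟨a,c⟩⟨b,d⟩ - ⟨a,d⟩⟨b,c⟩`. -/
def wedgeInner {n : ℕ} (a b c d : EuclideanSpace ℝ (Fin n)) : ℝ :=
  ⟪a, c⟫ * ⟪b, d⟫ - ⟪a, d⟫ * ⟪b, c⟫

/-- Fundamental domain for double integrals over `(ℝ/ℤ)²`. -/
def unitSq : Set (ℝ × ℝ) := Ioc (0 : ℝ) 1 ×ˢ Ioc (0 : ℝ) 1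

/-- The tangent-point functional `TP` (extended-real-valued). -/
def TPe {n : ℕ} (q : ℝ) (u : ℝ → EuclideanSpace ℝ (Fin n)) : ℝ≥0∞ :=
  ENNReal.ofReal (1 / q) *
    ∫⁻ p in unitSq, ENNReal.ofReal
      (wedgeSq (deriv u p.2) (u p.1 - u p.2) ^ (q / 2) / ‖u p.1 - u p.2‖ ^ (2 * q))

/-- The tangent-point functional `TP` (real-valued). -/
def TPr {n : ℕ} (q : ℝ) (u : ℝ → EuclideanSpace ℝ (Fin n)) : ℝ := (TPe q u).toReal

/-- The `q`-th power of the Sobolev–Slobodeckii seminorm `[f]_{W^{s,q}}` on `ℝ/ℤ`. -/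
def sobSemPow {n : ℕ} (s q : ℝ) (f : ℝ → EuclideanSpace ℝ (Fin n)) : ℝ≥0∞ :=
  ∫⁻ p in unitSq, ENNReal.ofReal (‖f p.1 - f p.2‖ ^ q / circDist p.1 p.2 ^ (1 + s * q))

/-- The `W^{s,q}`-norm `‖f‖_{L^q} + [f]_{W^{s,q}}`. -/
def Wnorm {n : ℕ} (s q : ℝ) (f : ℝ → EuclideanSpace ℝ (Fin n)) : ℝ :=
  (∫ x in Ioc (0 : ℝ) 1, ‖f x‖ ^ q) ^ (1 / q) + (sobSemPow s q f).toReal ^ (1 / q)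

/-- The bi-Lipschitz constant `bil(u) = sup_{x ≢ y} |x-y|_{ℝ/ℤ}/|u(x)-u(y)|`. -/
def bil {n : ℕ} (u : ℝ → EuclideanSpace ℝ (Fin n)) : ℝ≥0∞ :=
  ⨆ (x : ℝ) (y : ℝ) (_ : circDist x y ≠ 0),
    ENNReal.ofReal (circDist x y) / ENNReal.ofReal ‖u x - u y‖

/-- The `L^∞`-norm of the derivative of `u`. -/
def linfD {n : ℕ} (u : ℝ → EuclideanSpace ℝ (Fin n)) : ℝ≥0∞ :=
  ⨆ x : ℝ, (‖deriv u x‖₊ : ℝ≥0∞)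

/-- A periodic curve is embedded if it is injective on the circle `ℝ/ℤ`. -/
def Embedded {n : ℕ} (u : ℝ → EuclideanSpace ℝ (Fin n)) : Prop :=
  ∀ x y : ℝ, u x = u y → ((x : AddCircle (1 : ℝ)) = (y : AddCircle (1 : ℝ)))

/-- A curve is regular if `min_{ℝ/ℤ} |u'| > 0`. -/
def Regular {n : ℕ} (u : ℝ → EuclideanSpace ℝ (Fin n)) : Prop :=
  0 < ⨅ x : ℝ, ‖deriv u x‖

/-- Orthogonal projection of `b` onto the orthogonal complement of `ℝ a`. -/
def projPerp {n : ℕ} (a b : EuclideanSpace ℝ (Fin n)) : EuclideanSpace ℝ (Fin n) :=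
  b - (⟪b, a⟫ / ‖a‖ ^ 2) • a

/-- The classical tangent-point functional (extended-real-valued). -/
def TPcle {n : ℕ} (q : ℝ) (u : ℝ → EuclideanSpace ℝ (Fin n)) : ℝ≥0∞ :=
  ENNReal.ofReal (1 / q) *
    ∫⁻ p in unitSq, ENNReal.ofReal
      (‖projPerp (deriv u p.2) (u p.1 - u p.2)‖ ^ q / ‖u p.1 - u p.2‖ ^ (2 * q) *
        (‖deriv u p.1‖ * ‖deriv u p.2‖))

/-- The integrand of the functional `M(u; v, w)`. -/
def Mintegrand {n : ℕ} (q : ℝ) (u v w : ℝ → EuclideanSpace ℝ (Fin n)) (p : ℝ × ℝ) : ℝ :=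
  wedgeSq (deriv u p.2) (u p.1 - u p.2) ^ ((q - 2) / 2) / ‖u p.1 - u p.2‖ ^ (2 * q) *
    wedgeInner (deriv u p.2) (u p.1 - u p.2) (deriv v p.2)
      (w p.1 - w p.2 - wrap (p.1 - p.2) • deriv w p.2)

/-- The functional `M(u; v, w)` appearing in the first variation of `TP`. -/
def Mfun {n : ℕ} (q : ℝ) (u v w : ℝ → EuclideanSpace ℝ (Fin n)) : ℝ :=
  ∫ p in unitSq, Mintegrand q u v w p

/-- The integrand of the functional `A(u; v, w)`. -/
def Aintegrand {n : ℕ} (q : ℝ) (u v w : ℝ → EuclideanSpace ℝ (Fin n)) (p : ℝ × ℝ) : ℝ :=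
  wedgeSq (deriv u p.2) (u p.1 - u p.2) ^ (q / 2) / ‖u p.1 - u p.2‖ ^ (2 * q + 2) *
    ⟪v p.1 - v p.2, w p.1 - w p.2⟫

/-- The functional `A(u; v, w)` appearing in the first variation of `TP`. -/
def Afun {n : ℕ} (q : ℝ) (u v w : ℝ → EuclideanSpace ℝ (Fin n)) : ℝ :=
  ∫ p in unitSq, Aintegrand q u v w p

/-- The first variation `δTP(u)[w] = M(u;u,w) + M(u;w,u) - 2A(u;u,w)`. -/
def deltaTP {n : ℕ} (q : ℝ) (u w : ℝ → EuclideanSpace ℝ (Fin n)) : ℝ :=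
  Mfun q u u w + Mfun q u w u - 2 * Afun q u u w

/-- The `H²` inner product on periodic curves. -/
def H2inner (v w : ℝ → EuclideanSpace ℝ (Fin 3)) : ℝ :=
  ∫ x in Ioc (0 : ℝ) 1,
    (⟪v x, w x⟫ + ⟪deriv v x, deriv w x⟫ + ⟪deriv (deriv v) x, deriv (deriv w) x⟫)

/-- The total energy `E(u) = (κ/2)∫|u''|² + ρ TP(u)`. -/
def energyE (κ ρ q : ℝ) (u : ℝ → EuclideanSpace ℝ (Fin 3)) : ℝ :=
  κ / 2 * (∫ x in Ioc (0 : ℝ) 1, ‖deriv (deriv u) x‖ ^ 2) + ρ * TPr q u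

/-!
The wedge with `u'(y)` annihilates the tangential part of the chord `δ = u(x) - u(y)`, so the
density of `TP` at `(x, y)` is `‖a ∧ r‖^q ‖δ‖^(-2q)`, where `a = u'(y)` and `r` is the first-order
Taylor remainder. It is a function of the jet `(a, r, δ)`, which depends linearly on the curve, and
since `q > 2` and `δ ≠ 0` it can be differentiated twice in the jet. If `‖a‖ ≤ A`, `‖r‖ ≤ R`,
`‖δ‖ ≥ Y` and a variation is at most `μ` times `(A, R, Y)`, each derivative costs a factor `μ`
relative to the size `(A R)^q Y^(-2q)`.

Writing the remainder as an average of increments of `u'` along the arc and dilating, one gets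
`∬ |r|^q / |x - y|^(2q) ≤ [u']^q` for the seminorm of `W^{1-1/q,q}`, so this size is integrable and
dominates the derivatives under the integral sign. Morrey's embedding, which needs `q > 2`, bounds
`‖v'‖_∞` and hence `|v(x) - v(y)| / |x - y|`. Finally `bil u * |u'| ≥ 1` makes both
`bil u * ‖u'‖_∞` and `bil u * ‖u'‖_{W^{1-1/q,q}}` at least `1`, which turns norms of the variations
into multiples of the scales `A`, `R`, `Y` of `u`.
-/

section NormRpow

variable {F : Type*} [NormedAddCommGroup F] [InnerProductSpace ℝ F] {f : ℝ → F} {f' x y y' : F}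
  {s c X κ κ' : ℝ}

/-- The gradient of `x ↦ ‖x‖ ^ c`; at `x = 0` the formula gives the correct value `0` once
`1 < c`. -/
def normRpowGrad (c : ℝ) (x : F) : F := (c * ‖x‖ ^ (c - 2)) • x

/-- The derivative of `normRpowGrad c` at `x` in the direction `y`; at `x = 0` the formula gives
the correct value `0` once `2 < c`. -/
def normRpowHess (c : ℝ) (x y : F) : F :=
  (c * ‖x‖ ^ (c - 2)) • y + (c * (c - 2) * ‖x‖ ^ (c - 4) * ⟪x, y⟫) • x

lemma rpow_sub_one_mul_self_le (hX : 0 ≤ X) (c : ℝ) : X ^ (c - 1) * X ≤ X ^ c := by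
  rcases hX.eq_or_lt with rfl | hX
  · rw [mul_zero]
    positivity
  · rw [← Real.rpow_add_one hX.ne', sub_add_cancel]

lemma rpow_sub_two_mul_self_le (hX : 0 ≤ X) (c : ℝ) : X ^ (c - 2) * X ≤ X ^ (c - 1) := by
  simpa only [sub_sub, one_add_one_eq_two] using rpow_sub_one_mul_self_le hX (c - 1)

lemma rpow_sub_two_mul_self_mul_self_le (hX : 0 ≤ X) (c : ℝ) : X ^ (c - 2) * X * X ≤ X ^ c :=
  (mul_le_mul_of_nonneg_right (rpow_sub_two_mul_self_le hX c) hX).trans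
    (rpow_sub_one_mul_self_le hX c)

lemma norm_normRpowGrad_le (c : ℝ) (x : F) : ‖normRpowGrad c x‖ ≤ |c| * ‖x‖ ^ (c - 1) := by
  rw [normRpowGrad, norm_smul, norm_mul, Real.norm_eq_abs,
    Real.norm_of_nonneg (by positivity : 0 ≤ ‖x‖ ^ (c - 2)), mul_assoc]
  gcongr
  exact rpow_sub_two_mul_self_le (norm_nonneg x) c

lemma norm_normRpowHess_le (c : ℝ) (x y : F) :
    ‖normRpowHess c x y‖ ≤ |c| * (|c - 2| + 1) * ‖x‖ ^ (c - 2) * ‖y‖ := by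
  have hpow : ‖x‖ ^ (c - 4) * ‖x‖ * ‖x‖ ≤ ‖x‖ ^ (c - 2) := by
    convert rpow_sub_two_mul_self_mul_self_le (norm_nonneg x) (c - 2) using 4
    ring
  have hpos (e : ℝ) : |‖x‖ ^ e| = ‖x‖ ^ e := abs_of_nonneg (by positivity)
  calc ‖normRpowHess c x y‖
      ≤ |c| * ‖x‖ ^ (c - 2) * ‖y‖ + |c| * |c - 2| * ‖x‖ ^ (c - 4) * |⟪x, y⟫| * ‖x‖ := by
        refine (norm_add_le _ _).trans_eq ?_
        simp only [norm_smul, Real.norm_eq_abs, abs_mul, hpos]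
    _ ≤ |c| * ‖x‖ ^ (c - 2) * ‖y‖ + |c| * |c - 2| * ‖x‖ ^ (c - 4) * (‖x‖ * ‖y‖) * ‖x‖ := by
        gcongr
        exact abs_real_inner_le_norm x y
    _ = |c| * ‖x‖ ^ (c - 2) * ‖y‖ + |c| * |c - 2| * (‖x‖ ^ (c - 4) * ‖x‖ * ‖x‖) * ‖y‖ := by ring
    _ ≤ |c| * ‖x‖ ^ (c - 2) * ‖y‖ + |c| * |c - 2| * ‖x‖ ^ (c - 2) * ‖y‖ := by gcongr
    _ = |c| * (|c - 2| + 1) * ‖x‖ ^ (c - 2) * ‖y‖ := by ring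

lemma abs_inner_normRpowGrad_le (hX : 0 ≤ X) (hκ : 0 ≤ κ) (hx : ‖x‖ ^ (c - 1) ≤ X ^ (c - 1))
    (hy : ‖y‖ ≤ κ * X) : |⟪normRpowGrad c x, y⟫| ≤ |c| * κ * X ^ c :=
  calc |⟪normRpowGrad c x, y⟫| ≤ ‖normRpowGrad c x‖ * ‖y‖ := abs_real_inner_le_norm _ _
    _ ≤ |c| * X ^ (c - 1) * (κ * X) := by
        gcongr
        exact (norm_normRpowGrad_le c x).trans (by gcongr)
    _ = |c| * κ * (X ^ (c - 1) * X) := by ring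
    _ ≤ |c| * κ * X ^ c := by
        gcongr
        exact rpow_sub_one_mul_self_le hX c

lemma abs_inner_normRpowHess_le (hX : 0 ≤ X) (hκ : 0 ≤ κ) (hκ' : 0 ≤ κ')
    (hx : ‖x‖ ^ (c - 2) ≤ X ^ (c - 2)) (hy : ‖y‖ ≤ κ * X) (hy' : ‖y'‖ ≤ κ' * X) :
    |⟪normRpowHess c x y, y'⟫| ≤ |c| * (|c - 2| + 1) * (κ * κ') * X ^ c :=
  calc |⟪normRpowHess c x y, y'⟫| ≤ ‖normRpowHess c x y‖ * ‖y'‖ := abs_real_inner_le_norm _ _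
    _ ≤ |c| * (|c - 2| + 1) * X ^ (c - 2) * (κ * X) * (κ' * X) := by
        gcongr
        exact (norm_normRpowHess_le c x y).trans (by gcongr)
    _ = |c| * (|c - 2| + 1) * (κ * κ') * (X ^ (c - 2) * X * X) := by ring
    _ ≤ |c| * (|c - 2| + 1) * (κ * κ') * X ^ c := by
        gcongr
        exact rpow_sub_two_mul_self_mul_self_le hX c

lemma hasDerivAt_norm_rpow_comp_of_ne (hf : HasDerivAt f f' s) (h0 : f s ≠ 0) (c : ℝ) :
    HasDerivAt (fun t ↦ ‖f t‖ ^ c) ⟪normRpowGrad c (f s), f'⟫ s := by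
  have hsq (t : ℝ) (e : ℝ) : (‖f t‖ ^ 2) ^ e = ‖f t‖ ^ (2 * e) := by
    rw [← Real.rpow_natCast, ← Real.rpow_mul (norm_nonneg _), Nat.cast_ofNat]
  have h := hf.norm_sq.rpow_const (p := c / 2) (Or.inl (by positivity))
  simp only [hsq, mul_div_cancel₀ c two_ne_zero] at h
  refine h.congr_deriv ?_
  rw [normRpowGrad, real_inner_smul_left, mul_sub, mul_div_cancel₀ c two_ne_zero, mul_one]
  ring

lemma hasDerivAt_norm_rpow_comp (hf : HasDerivAt f f' s) (h : f s ≠ 0 ∨ 1 < c) :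
    HasDerivAt (fun t ↦ ‖f t‖ ^ c) ⟪normRpowGrad c (f s), f'⟫ s := by
  rcases h with h0 | hc
  · exact hasDerivAt_norm_rpow_comp_of_ne hf h0 c
  · refine ((hasFDerivAt_norm_rpow (f s) hc).comp_hasDerivAt s hf).congr_deriv ?_
    simp [normRpowGrad, real_inner_smul_left]

lemma hasFDerivAt_normRpowGrad_zero (hc : 2 < c) :
    HasFDerivAt (normRpowGrad c) (0 : F →L[ℝ] F) 0 := by
  apply HasFDerivAt.of_isLittleO
  have hcoeff : Tendsto (fun x : F ↦ c * ‖x‖ ^ (c - 2)) (𝓝 0) (𝓝 0) := by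
    have : ContinuousAt (fun x : F ↦ c * ‖x‖ ^ (c - 2)) 0 :=
      continuousAt_const.mul (continuous_norm.continuousAt.rpow_const (Or.inr (by linarith)))
    simpa [ContinuousAt, Real.zero_rpow (sub_pos.2 hc).ne'] using this
  simpa [normRpowGrad] using
    ((Asymptotics.isLittleO_one_iff ℝ).2 hcoeff).smul_isBigO
      (Asymptotics.isBigO_refl id (𝓝 (0 : F)))

lemma hasDerivAt_normRpowGrad_comp (hf : HasDerivAt f f' s) (h : f s ≠ 0 ∨ 2 < c) :
    HasDerivAt (fun t ↦ normRpowGrad c (f t)) (normRpowHess c (f s) f') s := by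
  by_cases h0 : f s = 0
  · have hc : 2 < c := h.resolve_left (not_not_intro h0)
    have hzero := hasFDerivAt_normRpowGrad_zero (F := F) hc
    rw [← h0] at hzero
    refine (hzero.comp_hasDerivAt s hf).congr_deriv ?_
    simp [normRpowHess, h0, Real.zero_rpow (sub_pos.2 hc).ne']
  · refine (((hasDerivAt_norm_rpow_comp_of_ne hf h0 (c - 2)).const_mul c).smul hf).congr_deriv ?_
    rw [normRpowHess, normRpowGrad, real_inner_smul_left]
    ring_nf

lemma measurable_normRpowGrad [MeasurableSpace F] [BorelSpace F] [SecondCountableTopology F]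
    (c : ℝ) : Measurable (normRpowGrad c : F → F) := by
  unfold normRpowGrad
  fun_prop

lemma measurable_normRpowHess [MeasurableSpace F] [BorelSpace F] [SecondCountableTopology F]
    (c : ℝ) : Measurable fun p : F × F ↦ normRpowHess c p.1 p.2 := by
  unfold normRpowHess
  fun_prop

end NormRpow

section JetBound

variable {E : Type*} [NormedAddCommGroup E] {A R Y μ ν q p s t : ℝ} {z v w : E × E × E}

/-- The jet `(a, r, δ)` satisfies `‖a‖ ≤ A`, `‖r‖ ≤ R` and `‖δ‖ ≥ Y > 0`. For a curve, `a` is the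
tangent vector at a point, `δ` a chord and `r` the Taylor remainder of that chord. -/
structure JetBound (A R Y : ℝ) (z : E × E × E) : Prop where
  norm_tangent_le : ‖z.1‖ ≤ A
  norm_remainder_le : ‖z.2.1‖ ≤ R
  chord_pos : 0 < Y
  le_norm_chord : Y ≤ ‖z.2.2‖

/-- The variation `v` is at most `μ` times as large as the scales `A`, `R`, `Y` of a jet satisfying
`JetBound A R Y`. -/
structure JetVariation (μ A R Y : ℝ) (v : E × E × E) : Prop where
  norm_tangent_le : ‖v.1‖ ≤ μ * A
  norm_remainder_le : ‖v.2.1‖ ≤ μ * R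
  norm_chord_le : ‖v.2.2‖ ≤ μ * Y

/-- The size `(A R) ^ q / Y ^ p` of the density `‖a ∧ r‖ ^ q / ‖δ‖ ^ p` at jets `(a, r, δ)`
satisfying `JetBound A R Y`. -/
def jetWeight (q p A R Y : ℝ) : ℝ := (A * R) ^ q * Y ^ (-p)

lemma jetWeight_rescale (hA : 0 ≤ A) (hR : 0 ≤ R) (hY : 0 ≤ Y) (q p : ℝ) :
    jetWeight q p (2 * A) (2 * R) (Y / 2) = 4 ^ q * 2 ^ p * jetWeight q p A R Y := by
  rw [jetWeight, jetWeight, Real.div_rpow hY zero_le_two, Real.rpow_neg zero_le_two,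
    show 2 * A * (2 * R) = 4 * (A * R) by ring, Real.mul_rpow zero_le_four (mul_nonneg hA hR),
    div_inv_eq_mul]
  ring

lemma JetBound.tangent_nonneg (hz : JetBound A R Y z) : 0 ≤ A :=
  (norm_nonneg _).trans hz.norm_tangent_le

lemma JetBound.remainder_nonneg (hz : JetBound A R Y z) : 0 ≤ R :=
  (norm_nonneg _).trans hz.norm_remainder_le

lemma JetBound.chord_ne_zero (hz : JetBound A R Y z) : z.2.2 ≠ 0 :=
  norm_pos_iff.1 (hz.chord_pos.trans_le hz.le_norm_chord)

lemma JetBound.norm_chord_rpow_le (hz : JetBound A R Y z) {e : ℝ} (he : e ≤ 0) :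
    ‖z.2.2‖ ^ e ≤ Y ^ e :=
  Real.rpow_le_rpow_of_nonpos hz.chord_pos hz.le_norm_chord he

lemma JetBound.abs_norm_chord_rpow_le (hz : JetBound A R Y z) {e : ℝ} (he : e ≤ 0) :
    |‖z.2.2‖ ^ e| ≤ Y ^ e :=
  (abs_of_nonneg (by positivity)).trans_le (hz.norm_chord_rpow_le he)

lemma JetVariation.nonneg (hv : JetVariation μ A R Y v) (hY : 0 < Y) : 0 ≤ μ :=
  nonneg_of_mul_nonneg_left ((norm_nonneg _).trans hv.norm_chord_le) hY

lemma JetVariation.rescale (hv : JetVariation μ A R Y v) (hA : 0 ≤ A) (hR : 0 ≤ R) (hμ : 0 ≤ μ) :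
    JetVariation (2 * μ) (2 * A) (2 * R) (Y / 2) v where
  norm_tangent_le := hv.norm_tangent_le.trans (by nlinarith [mul_nonneg hμ hA])
  norm_remainder_le := hv.norm_remainder_le.trans (by nlinarith [mul_nonneg hμ hR])
  norm_chord_le := hv.norm_chord_le.trans_eq (by ring)

variable [NormedSpace ℝ E]

lemma norm_smul_le_half_mul {x : E} {X : ℝ} (ht : |t| * μ ≤ 1 / 2) (hX : 0 ≤ X)
    (hx : ‖x‖ ≤ μ * X) : ‖t • x‖ ≤ X / 2 :=
  calc ‖t • x‖ = |t| * ‖x‖ := norm_smul t x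
    _ ≤ |t| * μ * X := by
        rw [mul_assoc]
        gcongr
    _ ≤ 1 / 2 * X := by gcongr
    _ = X / 2 := by ring

lemma JetBound.add_smul (hz : JetBound A R Y z) (hv : JetVariation μ A R Y v)
    (ht : |t| * μ ≤ 1 / 2) : JetBound (2 * A) (2 * R) (Y / 2) (z + t • v) where
  norm_tangent_le := by
    have := norm_smul_le_half_mul ht hz.tangent_nonneg hv.norm_tangent_le
    refine (norm_add_le z.1 (t • v.1)).trans ?_
    linarith [hz.norm_tangent_le, hz.tangent_nonneg]
  norm_remainder_le := by
    have := norm_smul_le_half_mul ht hz.remainder_nonneg hv.norm_remainder_le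
    refine (norm_add_le z.2.1 (t • v.2.1)).trans ?_
    linarith [hz.norm_remainder_le, hz.remainder_nonneg]
  chord_pos := half_pos hz.chord_pos
  le_norm_chord := by
    have := norm_smul_le_half_mul ht hz.chord_pos.le hv.norm_chord_le
    have := norm_sub_le_norm_add z.2.2 (t • v.2.2)
    exact le_trans (by linarith [hz.le_norm_chord]) this

variable {F : Type*} [NormedAddCommGroup F] [NormedSpace ℝ F] {B : E →L[ℝ] E →L[ℝ] F}

/-- The polarization of the quadratic map `(a, r, δ) ↦ B a r`. -/
def jetPolar (B : E →L[ℝ] E →L[ℝ] F) (z v : E × E × E) : F := B z.1 v.2.1 + B v.1 z.2.1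

lemma JetBound.norm_bilinear_le (hz : JetBound A R Y z) (hB : ∀ x y, ‖B x y‖ ≤ ‖x‖ * ‖y‖) :
    ‖B z.1 z.2.1‖ ≤ A * R :=
  (hB _ _).trans (mul_le_mul hz.norm_tangent_le hz.norm_remainder_le (norm_nonneg _)
    hz.tangent_nonneg)

lemma norm_jetPolar_le {A' R' : ℝ} (hB : ∀ x y, ‖B x y‖ ≤ ‖x‖ * ‖y‖) (hz : ‖z.1‖ ≤ A)
    (hz' : ‖z.2.1‖ ≤ R) (hv : ‖v.1‖ ≤ A') (hv' : ‖v.2.1‖ ≤ R') :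
    ‖jetPolar B z v‖ ≤ A * R' + A' * R :=
  (norm_add_le _ _).trans (add_le_add
    ((hB _ _).trans (mul_le_mul hz hv' (norm_nonneg _) ((norm_nonneg _).trans hz)))
    ((hB _ _).trans (mul_le_mul hv hz' (norm_nonneg _) ((norm_nonneg _).trans hv))))

lemma JetBound.norm_jetPolar_le (hz : JetBound A R Y z) (hv : JetVariation μ A R Y v)
    (hB : ∀ x y, ‖B x y‖ ≤ ‖x‖ * ‖y‖) : ‖jetPolar B z v‖ ≤ 2 * μ * (A * R) :=
  (_root_.norm_jetPolar_le hB hz.norm_tangent_le hz.norm_remainder_le hv.norm_tangent_le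
    hv.norm_remainder_le).trans_eq (by ring)

lemma JetVariation.norm_jetPolar_le (hv : JetVariation μ A R Y v) (hw : JetVariation ν A R Y w)
    (hB : ∀ x y, ‖B x y‖ ≤ ‖x‖ * ‖y‖) : ‖jetPolar B v w‖ ≤ 2 * (μ * ν) * (A * R) :=
  (_root_.norm_jetPolar_le hB hv.norm_tangent_le hv.norm_remainder_le hw.norm_tangent_le
    hw.norm_remainder_le).trans_eq (by ring)

lemma hasDerivAt_bilinear_jet {z : ℝ → E × E × E} (hz : HasDerivAt z v s) :
    HasDerivAt (fun t ↦ B (z t).1 (z t).2.1) (jetPolar B (z s) v) s :=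
  B.hasDerivAt_of_bilinear (fun _ ↦ hz.fst) (fun _ ↦ hz.snd.fst)

lemma hasDerivAt_jetPolar {z : ℝ → E × E × E} (hz : HasDerivAt z v s) (w : E × E × E) :
    HasDerivAt (fun t ↦ jetPolar B (z t) w) (jetPolar B v w) s :=
  ((B.flip w.2.1).hasFDerivAt.comp_hasDerivAt s hz.fst).add
    ((B w.1).hasFDerivAt.comp_hasDerivAt s hz.snd.fst)

end JetBound

section JetDensity

variable {E F : Type*} [NormedAddCommGroup E] [InnerProductSpace ℝ E] [NormedAddCommGroup F]
  [InnerProductSpace ℝ F] {B : E →L[ℝ] E →L[ℝ] F} {q p A R Y μ ν s : ℝ} {z v w : E × E × E}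

/-- The density `‖B a r‖ ^ q / ‖δ‖ ^ p` at a jet `(a, r, δ)`. -/
def jetDensity (q p : ℝ) (B : E →L[ℝ] E →L[ℝ] F) (z : E × E × E) : ℝ :=
  ‖B z.1 z.2.1‖ ^ q * ‖z.2.2‖ ^ (-p)

/-- The derivative of `jetDensity q p B` at `z` in the direction `w`. -/
def jetDensityDeriv (q p : ℝ) (B : E →L[ℝ] E →L[ℝ] F) (z w : E × E × E) : ℝ :=
  ⟪normRpowGrad q (B z.1 z.2.1), jetPolar B z w⟫ * ‖z.2.2‖ ^ (-p) +
    ‖B z.1 z.2.1‖ ^ q * ⟪normRpowGrad (-p) z.2.2, w.2.2⟫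

/-- The derivative of `z ↦ jetDensityDeriv q p B z w` at `z` in the direction `v`. -/
def jetDensityDeriv₂ (q p : ℝ) (B : E →L[ℝ] E →L[ℝ] F) (z v w : E × E × E) : ℝ :=
  (⟪normRpowHess q (B z.1 z.2.1) (jetPolar B z v), jetPolar B z w⟫ +
        ⟪normRpowGrad q (B z.1 z.2.1), jetPolar B v w⟫) * ‖z.2.2‖ ^ (-p) +
      ⟪normRpowGrad q (B z.1 z.2.1), jetPolar B z w⟫ * ⟪normRpowGrad (-p) z.2.2, v.2.2⟫ +
    (⟪normRpowGrad q (B z.1 z.2.1), jetPolar B z v⟫ * ⟪normRpowGrad (-p) z.2.2, w.2.2⟫ +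
      ‖B z.1 z.2.1‖ ^ q * ⟪normRpowHess (-p) z.2.2 v.2.2, w.2.2⟫)

lemma hasDerivAt_jetDensity {z : ℝ → E × E × E} (hz : HasDerivAt z v s) (hq : 1 < q)
    (hδ : (z s).2.2 ≠ 0) :
    HasDerivAt (fun t ↦ jetDensity q p B (z t)) (jetDensityDeriv q p B (z s) v) s :=
  (hasDerivAt_norm_rpow_comp (hasDerivAt_bilinear_jet hz) (Or.inr hq)).mul
    (hasDerivAt_norm_rpow_comp hz.snd.snd (Or.inl hδ))

lemma hasDerivAt_jetDensityDeriv {z : ℝ → E × E × E} (hz : HasDerivAt z v s) (hq : 2 < q)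
    (hδ : (z s).2.2 ≠ 0) (w : E × E × E) :
    HasDerivAt (fun t ↦ jetDensityDeriv q p B (z t) w) (jetDensityDeriv₂ q p B (z s) v w) s := by
  have hΩ := hasDerivAt_bilinear_jet (B := B) hz
  have h₁ := ((hasDerivAt_normRpowGrad_comp hΩ (Or.inr hq)).inner ℝ
    (hasDerivAt_jetPolar (B := B) hz w)).mul
      (hasDerivAt_norm_rpow_comp (c := -p) hz.snd.snd (Or.inl hδ))
  have h₂ := (hasDerivAt_norm_rpow_comp hΩ (Or.inr (by linarith))).mul
    ((hasDerivAt_normRpowGrad_comp (c := -p) hz.snd.snd (Or.inl hδ)).inner ℝ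
      (hasDerivAt_const s w.2.2))
  refine (h₁.add h₂).congr_deriv ?_
  rw [inner_zero_right, zero_add, add_comm ⟪_, jetPolar B v w⟫]
  rfl

lemma abs_add_le_add {x y a b : ℝ} (hx : |x| ≤ a) (hy : |y| ≤ b) : |x + y| ≤ a + b :=
  (abs_add_le x y).trans (add_le_add hx hy)

lemma abs_mul_le_mul {x y a b : ℝ} (hx : |x| ≤ a) (hy : |y| ≤ b) : |x * y| ≤ a * b :=
  (abs_mul x y).trans_le (mul_le_mul hx hy (abs_nonneg y) ((abs_nonneg x).trans hx))

lemma JetBound.abs_inner_normRpowGrad_bilinear_le (hz : JetBound A R Y z) {κ : ℝ} {y : F}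
    (hB : ∀ x y, ‖B x y‖ ≤ ‖x‖ * ‖y‖) (hq : 1 ≤ q) (hκ : 0 ≤ κ) (hy : ‖y‖ ≤ κ * (A * R)) :
    |⟪normRpowGrad q (B z.1 z.2.1), y⟫| ≤ q * κ * (A * R) ^ q := by
  have h := abs_inner_normRpowGrad_le (mul_nonneg hz.tangent_nonneg hz.remainder_nonneg) hκ
    (Real.rpow_le_rpow (norm_nonneg _) (hz.norm_bilinear_le hB) (sub_nonneg.2 hq)) hy
  rwa [abs_of_nonneg (by linarith : 0 ≤ q)] at h

lemma JetBound.abs_inner_normRpowGrad_chord_le (hz : JetBound A R Y z)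
    (hv : JetVariation μ A R Y v) (hp : 0 ≤ p) :
    |⟪normRpowGrad (-p) z.2.2, v.2.2⟫| ≤ p * μ * Y ^ (-p) := by
  have h := abs_inner_normRpowGrad_le (c := -p) hz.chord_pos.le (hv.nonneg hz.chord_pos)
    (hz.norm_chord_rpow_le (by linarith)) hv.norm_chord_le
  rwa [abs_neg, abs_of_nonneg hp] at h

lemma JetBound.abs_norm_bilinear_rpow_le (hz : JetBound A R Y z)
    (hB : ∀ x y, ‖B x y‖ ≤ ‖x‖ * ‖y‖) (hq : 0 ≤ q) : |‖B z.1 z.2.1‖ ^ q| ≤ (A * R) ^ q :=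
  (abs_of_nonneg (by positivity)).trans_le
    (Real.rpow_le_rpow (norm_nonneg _) (hz.norm_bilinear_le hB) hq)

lemma JetBound.abs_jetDensity_le (hz : JetBound A R Y z) (hB : ∀ x y, ‖B x y‖ ≤ ‖x‖ * ‖y‖)
    (hq : 0 ≤ q) (hp : 0 ≤ p) : |jetDensity q p B z| ≤ jetWeight q p A R Y :=
  abs_mul_le_mul (hz.abs_norm_bilinear_rpow_le hB hq)
    (hz.abs_norm_chord_rpow_le (neg_nonpos.2 hp))

lemma JetBound.abs_jetDensityDeriv_le (hz : JetBound A R Y z) (hw : JetVariation ν A R Y w)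
    (hB : ∀ x y, ‖B x y‖ ≤ ‖x‖ * ‖y‖) (hq : 1 ≤ q) (hp : 0 ≤ p) :
    |jetDensityDeriv q p B z w| ≤ (2 * q + p) * ν * jetWeight q p A R Y := by
  have hν := hw.nonneg hz.chord_pos
  have hΩ := hz.abs_norm_bilinear_rpow_le hB (by linarith : 0 ≤ q)
  have hδ := hz.abs_norm_chord_rpow_le (neg_nonpos.2 hp)
  have hΩw := hz.abs_inner_normRpowGrad_bilinear_le hB hq (by positivity)
    (hz.norm_jetPolar_le hw hB)
  have hδw := hz.abs_inner_normRpowGrad_chord_le hw hp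
  refine (abs_add_le_add (abs_mul_le_mul hΩw hδ) (abs_mul_le_mul hΩ hδw)).trans_eq ?_
  rw [jetWeight]
  ring

lemma JetBound.abs_inner_normRpowHess_bilinear_le (hz : JetBound A R Y z)
    (hv : JetVariation μ A R Y v) (hw : JetVariation ν A R Y w)
    (hB : ∀ x y, ‖B x y‖ ≤ ‖x‖ * ‖y‖) (hq : 2 ≤ q) :
    |⟪normRpowHess q (B z.1 z.2.1) (jetPolar B z v), jetPolar B z w⟫| ≤
      4 * q * (q - 1) * (μ * ν) * (A * R) ^ q := by
  have hμ := hv.nonneg hz.chord_pos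
  have hν := hw.nonneg hz.chord_pos
  refine (abs_inner_normRpowHess_le (mul_nonneg hz.tangent_nonneg hz.remainder_nonneg)
    (by positivity : 0 ≤ 2 * μ) (by positivity : 0 ≤ 2 * ν)
    (Real.rpow_le_rpow (norm_nonneg _) (hz.norm_bilinear_le hB) (sub_nonneg.2 hq))
    (hz.norm_jetPolar_le hv hB) (hz.norm_jetPolar_le hw hB)).trans_eq ?_
  rw [abs_of_nonneg (by linarith : 0 ≤ q), abs_of_nonneg (sub_nonneg.2 hq)]
  ring

lemma JetBound.abs_inner_normRpowHess_chord_le (hz : JetBound A R Y z)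
    (hv : JetVariation μ A R Y v) (hw : JetVariation ν A R Y w) (hp : 0 ≤ p) :
    |⟪normRpowHess (-p) z.2.2 v.2.2, w.2.2⟫| ≤ p * (p + 3) * (μ * ν) * Y ^ (-p) := by
  refine (abs_inner_normRpowHess_le (c := -p) hz.chord_pos.le (hv.nonneg hz.chord_pos)
    (hw.nonneg hz.chord_pos) (hz.norm_chord_rpow_le (by linarith)) hv.norm_chord_le
    hw.norm_chord_le).trans_eq ?_
  rw [abs_neg, abs_of_nonneg hp, abs_of_nonpos (by linarith)]
  ring

lemma JetBound.abs_jetDensityDeriv₂_le (hz : JetBound A R Y z) (hv : JetVariation μ A R Y v)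
    (hw : JetVariation ν A R Y w) (hB : ∀ x y, ‖B x y‖ ≤ ‖x‖ * ‖y‖) (hq : 2 ≤ q) (hp : 0 ≤ p) :
    |jetDensityDeriv₂ q p B z v w| ≤
      (4 * q * (q - 1) + 2 * q + 4 * q * p + p * (p + 3)) * (μ * ν) * jetWeight q p A R Y := by
  have hμ := hv.nonneg hz.chord_pos
  have hν := hw.nonneg hz.chord_pos
  have hq₁ : 1 ≤ q := by linarith
  have hΩ := hz.abs_norm_bilinear_rpow_le hB (by linarith : 0 ≤ q)
  have hΩv := hz.abs_inner_normRpowGrad_bilinear_le hB hq₁ (by positivity)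
    (hz.norm_jetPolar_le hv hB)
  have hΩw := hz.abs_inner_normRpowGrad_bilinear_le hB hq₁ (by positivity)
    (hz.norm_jetPolar_le hw hB)
  have hΩvw := abs_add_le_add (hz.abs_inner_normRpowHess_bilinear_le hv hw hB hq)
    (hz.abs_inner_normRpowGrad_bilinear_le hB hq₁ (by positivity) (hv.norm_jetPolar_le hw hB))
  have hδ := hz.abs_norm_chord_rpow_le (neg_nonpos.2 hp)
  have hδv := hz.abs_inner_normRpowGrad_chord_le hv hp
  have hδw := hz.abs_inner_normRpowGrad_chord_le hw hp
  have hδvw := hz.abs_inner_normRpowHess_chord_le hv hw hp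
  refine (abs_add_le_add
    (abs_add_le_add (abs_mul_le_mul hΩvw hδ) (abs_mul_le_mul hΩw hδv))
    (abs_add_le_add (abs_mul_le_mul hΩv hδw) (abs_mul_le_mul hΩ hδvw))).trans_eq ?_
  rw [jetWeight]
  ring

end JetDensity

section JetIntegral

variable {X E F : Type*} [MeasurableSpace X] [NormedAddCommGroup E] {q p μ ν : ℝ}
  {m : Measure X} {A R Y : X → ℝ} {z v w : X → E × E × E}

lemma integrable_jetWeight_rescale (hz : ∀ᵐ x ∂m, JetBound (A x) (R x) (Y x) (z x))
    (hint : Integrable (fun x ↦ jetWeight q p (A x) (R x) (Y x)) m) :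
    Integrable (fun x ↦ jetWeight q p (2 * A x) (2 * R x) (Y x / 2)) m := by
  refine (hint.const_mul (4 ^ q * 2 ^ p)).congr ?_
  filter_upwards [hz] with x hx
  exact (jetWeight_rescale hx.tangent_nonneg hx.remainder_nonneg hx.chord_pos.le q p).symm

lemma eventually_abs_mul_le_half (ν : ℝ) : ∀ᶠ t in 𝓝 (0 : ℝ), |t| * ν ≤ 1 / 2 := by
  have : ContinuousAt (fun t : ℝ ↦ |t| * ν) 0 := by fun_prop
  exact this.eventually_le_const (by simp)

lemma hasDerivAt_const_add_smul [NormedSpace ℝ E] (x y : E) (t : ℝ) :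
    HasDerivAt (fun t : ℝ ↦ x + t • y) y t := by
  simpa using ((hasDerivAt_id t).smul_const y).const_add x

variable [InnerProductSpace ℝ E] [NormedAddCommGroup F] [InnerProductSpace ℝ F]
  {B : E →L[ℝ] E →L[ℝ] F}

lemma abs_integral_jetDensityDeriv₂_le (hB : ∀ x y, ‖B x y‖ ≤ ‖x‖ * ‖y‖) (hq : 2 ≤ q)
    (hp : 0 ≤ p) (hzb : ∀ᵐ x ∂m, JetBound (A x) (R x) (Y x) (z x))
    (hvb : ∀ᵐ x ∂m, JetVariation μ (A x) (R x) (Y x) (v x))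
    (hwb : ∀ᵐ x ∂m, JetVariation ν (A x) (R x) (Y x) (w x))
    (hint : Integrable (fun x ↦ jetWeight q p (A x) (R x) (Y x)) m) :
    |∫ x, jetDensityDeriv₂ q p B (z x) (v x) (w x) ∂m| ≤
      (4 * q * (q - 1) + 2 * q + 4 * q * p + p * (p + 3)) * (μ * ν) *
        ∫ x, jetWeight q p (A x) (R x) (Y x) ∂m := by
  rw [← integral_const_mul, ← Real.norm_eq_abs]
  refine norm_integral_le_of_norm_le (hint.const_mul _) ?_
  filter_upwards [hzb, hvb, hwb] with x hx hvx hwx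
  exact hx.abs_jetDensityDeriv₂_le hvx hwx hB hq hp

variable [MeasurableSpace E] [BorelSpace E] [SecondCountableTopology E] [MeasurableSpace F]
  [BorelSpace F]

lemma measurable_jetPolar (hz : Measurable z) (hv : Measurable v) :
    Measurable fun x ↦ jetPolar B (z x) (v x) :=
  (show Continuous fun y : (E × E × E) × (E × E × E) ↦ B y.1.1 y.2.2.1 + B y.2.1 y.1.2.1 by
    fun_prop).measurable.comp (hz.prodMk hv)

lemma measurable_jetDensity (hz : Measurable z) : Measurable fun x ↦ jetDensity q p B (z x) := by
  unfold jetDensity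
  fun_prop

variable [SecondCountableTopology F]

lemma measurable_jetDensityDeriv (hz : Measurable z) (hw : Measurable w) :
    Measurable fun x ↦ jetDensityDeriv q p B (z x) (w x) := by
  have := measurable_jetPolar (B := B) hz hw
  have := measurable_normRpowGrad (F := E) (-p)
  have := measurable_normRpowGrad (F := F) q
  unfold jetDensityDeriv
  fun_prop

lemma measurable_jetDensityDeriv₂ (hz : Measurable z) (hv : Measurable v) (hw : Measurable w) :
    Measurable fun x ↦ jetDensityDeriv₂ q p B (z x) (v x) (w x) := by
  have := measurable_jetPolar (B := B) hz hv
  have := measurable_jetPolar (B := B) hz hw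
  have := measurable_jetPolar (B := B) hv hw
  have := measurable_normRpowGrad (F := E) (-p)
  have := measurable_normRpowGrad (F := F) q
  have := measurable_normRpowHess (F := E) (-p)
  have := measurable_normRpowHess (F := F) q
  unfold jetDensityDeriv₂
  fun_prop

lemma hasDerivAt_integral_jetDensity (hB : ∀ x y, ‖B x y‖ ≤ ‖x‖ * ‖y‖) (hq : 1 < q) (hp : 0 ≤ p)
    (hz : Measurable z) (hw : Measurable w) (hzb : ∀ᵐ x ∂m, JetBound (A x) (R x) (Y x) (z x))
    (hwb : ∀ᵐ x ∂m, JetVariation ν (A x) (R x) (Y x) (w x))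
    (hint : Integrable (fun x ↦ jetWeight q p (A x) (R x) (Y x)) m) :
    HasDerivAt (fun t : ℝ ↦ ∫ x, jetDensity q p B (z x + t • w x) ∂m)
      (∫ x, jetDensityDeriv q p B (z x) (w x) ∂m) 0 := by
  have hzt (t : ℝ) : Measurable fun x ↦ z x + t • w x := hz.add (hw.const_smul t)
  have key := hasDerivAt_integral_of_dominated_loc_of_deriv_le (μ := m)
    (F := fun (t : ℝ) x ↦ jetDensity q p B (z x + t • w x))
    (F' := fun t x ↦ jetDensityDeriv q p B (z x + t • w x) (w x))
    (bound := fun x ↦ (2 * q + p) * (2 * ν) * jetWeight q p (2 * A x) (2 * R x) (Y x / 2))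
    (eventually_abs_mul_le_half ν)
    (Eventually.of_forall fun t ↦ (measurable_jetDensity (hzt t)).aestronglyMeasurable)
    (hint.mono' (measurable_jetDensity (hzt 0)).aestronglyMeasurable ?_)
    (measurable_jetDensityDeriv (hzt 0) hw).aestronglyMeasurable ?_
    ((integrable_jetWeight_rescale hzb hint).const_mul _) ?_
  · simpa only [zero_smul, add_zero] using key.2
  · filter_upwards [hzb] with x hx
    simpa only [zero_smul, add_zero, Real.norm_eq_abs] using
      hx.abs_jetDensity_le hB (by linarith) hp
  · filter_upwards [hzb, hwb] with x hx hwx t ht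
    exact (hx.add_smul hwx ht).abs_jetDensityDeriv_le
      (hwx.rescale hx.tangent_nonneg hx.remainder_nonneg (hwx.nonneg hx.chord_pos)) hB hq.le hp
  · filter_upwards [hzb, hwb] with x hx hwx t ht
    exact hasDerivAt_jetDensity (hasDerivAt_const_add_smul (z x) (w x) t) hq
      (hx.add_smul hwx ht).chord_ne_zero

lemma eventually_hasDerivAt_integral_jetDensity (hB : ∀ x y, ‖B x y‖ ≤ ‖x‖ * ‖y‖) (hq : 1 < q)
    (hp : 0 ≤ p) (hz : Measurable z) (hv : Measurable v) (hw : Measurable w)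
    (hzb : ∀ᵐ x ∂m, JetBound (A x) (R x) (Y x) (z x))
    (hvb : ∀ᵐ x ∂m, JetVariation μ (A x) (R x) (Y x) (v x))
    (hwb : ∀ᵐ x ∂m, JetVariation ν (A x) (R x) (Y x) (w x))
    (hint : Integrable (fun x ↦ jetWeight q p (A x) (R x) (Y x)) m) :
    ∀ᶠ s in 𝓝 (0 : ℝ),
      HasDerivAt (fun t : ℝ ↦ ∫ x, jetDensity q p B (z x + s • v x + t • w x) ∂m)
        (∫ x, jetDensityDeriv q p B (z x + s • v x) (w x) ∂m) 0 := by
  filter_upwards [eventually_abs_mul_le_half μ] with s hs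
  refine hasDerivAt_integral_jetDensity hB hq hp (hz.add (hv.const_smul s)) hw ?_ ?_
    (integrable_jetWeight_rescale hzb hint) (ν := 2 * ν)
  · filter_upwards [hzb, hvb] with x hx hvx
    exact hx.add_smul hvx hs
  · filter_upwards [hzb, hwb] with x hx hwx
    exact hwx.rescale hx.tangent_nonneg hx.remainder_nonneg (hwx.nonneg hx.chord_pos)

lemma hasDerivAt_integral_jetDensityDeriv (hB : ∀ x y, ‖B x y‖ ≤ ‖x‖ * ‖y‖) (hq : 2 < q)
    (hp : 0 ≤ p) (hz : Measurable z) (hv : Measurable v) (hw : Measurable w)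
    (hzb : ∀ᵐ x ∂m, JetBound (A x) (R x) (Y x) (z x))
    (hvb : ∀ᵐ x ∂m, JetVariation μ (A x) (R x) (Y x) (v x))
    (hwb : ∀ᵐ x ∂m, JetVariation ν (A x) (R x) (Y x) (w x))
    (hint : Integrable (fun x ↦ jetWeight q p (A x) (R x) (Y x)) m) :
    HasDerivAt (fun s : ℝ ↦ ∫ x, jetDensityDeriv q p B (z x + s • v x) (w x) ∂m)
      (∫ x, jetDensityDeriv₂ q p B (z x) (v x) (w x) ∂m) 0 := by
  have hzs (s : ℝ) : Measurable fun x ↦ z x + s • v x := hz.add (hv.const_smul s)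
  have key := hasDerivAt_integral_of_dominated_loc_of_deriv_le (μ := m)
    (F := fun (s : ℝ) x ↦ jetDensityDeriv q p B (z x + s • v x) (w x))
    (F' := fun s x ↦ jetDensityDeriv₂ q p B (z x + s • v x) (v x) (w x))
    (bound := fun x ↦ (4 * q * (q - 1) + 2 * q + 4 * q * p + p * (p + 3)) * (2 * μ * (2 * ν)) *
      jetWeight q p (2 * A x) (2 * R x) (Y x / 2))
    (eventually_abs_mul_le_half μ)
    (Eventually.of_forall fun s ↦ (measurable_jetDensityDeriv (hzs s) hw).aestronglyMeasurable)
    ((hint.const_mul ((2 * q + p) * ν)).mono'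
      (measurable_jetDensityDeriv (hzs 0) hw).aestronglyMeasurable ?_)
    (measurable_jetDensityDeriv₂ (hzs 0) hv hw).aestronglyMeasurable ?_
    ((integrable_jetWeight_rescale hzb hint).const_mul _) ?_
  · simpa only [zero_smul, add_zero] using key.2
  · filter_upwards [hzb, hwb] with x hx hwx
    simpa only [zero_smul, add_zero, Real.norm_eq_abs] using
      hx.abs_jetDensityDeriv_le hwx hB (by linarith) hp
  · filter_upwards [hzb, hvb, hwb] with x hx hvx hwx s hs
    exact (hx.add_smul hvx hs).abs_jetDensityDeriv₂_le
      (hvx.rescale hx.tangent_nonneg hx.remainder_nonneg (hvx.nonneg hx.chord_pos))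
      (hwx.rescale hx.tangent_nonneg hx.remainder_nonneg (hwx.nonneg hx.chord_pos)) hB hq.le hp
  · filter_upwards [hzb, hvb] with x hx hvx s hs
    exact hasDerivAt_jetDensityDeriv (hasDerivAt_const_add_smul (z x) (v x) s) hq
      (hx.add_smul hvx hs).chord_ne_zero (w x)

end JetIntegral

section Wedge

/-- The wedge product `a ∧ b`, encoded as the antisymmetric array of its coordinates. Each
coordinate plane appears twice in the array, whence the factor `1 / √2`. -/
def wedge (n : ℕ) : EuclideanSpace ℝ (Fin n) →L[ℝ] EuclideanSpace ℝ (Fin n) →L[ℝ]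
    EuclideanSpace ℝ (Fin n × Fin n) :=
  (LinearMap.mk₂ ℝ
    (fun a b ↦ WithLp.toLp 2 fun p ↦ (√2)⁻¹ * (a p.1 * b p.2 - a p.2 * b p.1))
    (fun a b c ↦ by ext p; simp; ring) (fun a b c ↦ by ext p; simp; ring)
    (fun a b c ↦ by ext p; simp; ring)
    (fun a b c ↦ by ext p; simp; ring)).toContinuousBilinearMap

variable {n : ℕ}

lemma wedge_apply (a b : EuclideanSpace ℝ (Fin n)) (p : Fin n × Fin n) :
    wedge n a b p = (√2)⁻¹ * (a p.1 * b p.2 - a p.2 * b p.1) := by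
  simp [wedge]

lemma wedge_self (a : EuclideanSpace ℝ (Fin n)) : wedge n a a = 0 := by
  ext p
  rw [wedge_apply, mul_comm (a p.2), sub_self, mul_zero, PiLp.zero_apply]

lemma norm_wedge_sq (a b : EuclideanSpace ℝ (Fin n)) : ‖wedge n a b‖ ^ 2 = wedgeSq a b := by
  have entry_sq (i j : Fin n) : wedge n a b (i, j) ^ 2 =
      1 / 2 * (a i ^ 2 * b j ^ 2) + 1 / 2 * (a j ^ 2 * b i ^ 2) - (a i * b i) * (a j * b j) := by
    rw [wedge_apply, mul_pow, inv_pow, Real.sq_sqrt zero_le_two]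
    ring
  have inner_eq : ⟪a, b⟫ = ∑ i, a i * b i := by simp [PiLp.inner_apply, mul_comm]
  simp only [wedgeSq, EuclideanSpace.norm_sq_eq, inner_eq, Fintype.sum_prod_type,
    Real.norm_eq_abs, sq_abs, entry_sq, Finset.sum_add_distrib, Finset.sum_sub_distrib]
  rw [sq (∑ i, a i * b i), Finset.sum_mul_sum, Finset.sum_mul_sum,
    Finset.sum_comm (f := fun i j ↦ 1 / 2 * (a j ^ 2 * b i ^ 2))]
  simp only [← Finset.mul_sum]
  ring

lemma norm_wedge_le (a b : EuclideanSpace ℝ (Fin n)) : ‖wedge n a b‖ ≤ ‖a‖ * ‖b‖ := by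
  refine le_of_sq_le_sq ?_ (by positivity)
  rw [norm_wedge_sq, wedgeSq, mul_pow]
  exact sub_le_self _ (sq_nonneg _)

end Wedge

section Circle

lemma wrap_eq_add_floor (z : ℝ) : wrap z = z + ⌊1 / 2 - z⌋ := by
  rw [wrap, Int.fract]
  ring

lemma wrap_eq_self {z : ℝ} (hz : z ∈ Ioc (-(1 / 2) : ℝ) (1 / 2)) : wrap z = z := by
  rw [wrap, Int.fract_eq_self.2 ⟨by linarith [hz.2], by linarith [hz.1]⟩]
  ring

lemma abs_wrap_le_half (z : ℝ) : |wrap z| ≤ 1 / 2 := by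
  have h_nonneg := Int.fract_nonneg (1 / 2 - z)
  have h_lt := Int.fract_lt_one (1 / 2 - z)
  rw [wrap, abs_le]
  constructor <;> linarith

lemma periodic_wrap : Function.Periodic wrap 1 := fun z ↦ by
  have : (1 / 2 : ℝ) - (z + 1) = 1 / 2 - z - (1 : ℤ) := by push_cast; ring
  rw [wrap, wrap, this, Int.fract_sub_intCast]

@[fun_prop]
lemma measurable_wrap : Measurable wrap := by
  unfold wrap
  fun_prop

lemma apply_eq_apply_add_wrap_sub {β : Type*} {f : ℝ → β} (hf : Function.Periodic f 1)
    (x y : ℝ) : f x = f (y + wrap (x - y)) := by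
  have h_shift := hf.int_mul ⌊1 / 2 - (x - y)⌋ x
  rw [mul_one] at h_shift
  rw [wrap_eq_add_floor, ← add_assoc, add_sub_cancel, h_shift]

lemma circDist_eq_abs_wrap (x y : ℝ) : circDist x y = |wrap (x - y)| := by
  have h : ((x - y : ℝ) : AddCircle (1 : ℝ)) = (wrap (x - y) : ℝ) := by
    rw [wrap_eq_add_floor, AddCircle.coe_add, left_eq_add]
    exact (AddCircle.coe_eq_zero_iff 1).2 ⟨⌊1 / 2 - (x - y)⌋, by simp⟩
  rw [circDist, h]
  exact (AddCircle.norm_coe_eq_abs_iff 1 one_ne_zero).2 (by simpa using abs_wrap_le_half _)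

lemma circDist_nonneg (x y : ℝ) : 0 ≤ circDist x y := norm_nonneg _

lemma circDist_comm (x y : ℝ) : circDist x y = circDist y x := by
  rw [circDist, circDist, ← norm_neg, ← AddCircle.coe_neg, neg_sub]

lemma circDist_le_abs_sub (x y : ℝ) : circDist x y ≤ |x - y| := QuotientAddGroup.norm_mk_le_norm

lemma circDist_eq_abs_sub {x y : ℝ} (h : x - y ∈ Ioc (-(1 / 2) : ℝ) (1 / 2)) :
    circDist x y = |x - y| := by
  rw [circDist_eq_abs_wrap, wrap_eq_self h]

lemma periodic_circDist_left (y : ℝ) : Function.Periodic (circDist · y) 1 := fun x ↦ by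
  dsimp only
  rw [circDist_eq_abs_wrap, circDist_eq_abs_wrap, add_sub_right_comm, periodic_wrap]

lemma periodic_circDist_right (x : ℝ) : Function.Periodic (circDist x) 1 := fun y ↦ by
  rw [circDist_comm, circDist_comm x]
  exact periodic_circDist_left x y

@[fun_prop]
lemma measurable_circDist : Measurable fun p : ℝ × ℝ ↦ circDist p.1 p.2 := by
  simp only [circDist_eq_abs_wrap]
  fun_prop

lemma apply_eq_of_circDist_eq_zero {β : Type*} {f : ℝ → β} (hf : Function.Periodic f 1) {x y : ℝ}
    (h : circDist x y = 0) : f x = f y := by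
  rw [circDist_eq_abs_wrap, abs_eq_zero] at h
  rw [apply_eq_apply_add_wrap_sub hf x y, h, add_zero]

lemma periodic_deriv {E : Type*} [NormedAddCommGroup E] [NormedSpace ℝ E] {f : ℝ → E} {c : ℝ}
    (hf : Function.Periodic f c) : Function.Periodic (deriv f) c := fun x ↦ by
  rw [← deriv_comp_add_const, funext hf]

lemma ae_circDist_pos : ∀ᵐ p : ℝ × ℝ, 0 < circDist p.1 p.2 := by
  have hs : MeasurableSet {p : ℝ × ℝ | ¬ 0 < circDist p.1 p.2} :=
    (measurableSet_lt measurable_const measurable_circDist).compl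
  rw [ae_iff, Measure.volume_eq_prod, Measure.measure_prod_null hs]
  refine ae_of_all _ fun x ↦ Set.Countable.measure_zero
    (Set.Countable.mono ?_ (countable_range fun k : ℤ ↦ x + k)) _
  intro y hy
  have h_wrap : ¬ 0 < |wrap (x - y)| := by simpa [circDist_eq_abs_wrap] using hy
  rw [abs_pos, not_not, wrap_eq_add_floor] at h_wrap
  exact ⟨⌊1 / 2 - (x - y)⌋, by simp only; linarith⟩

end Circle

section PeriodicIntegrals

lemma setLIntegral_Ioc_eq_of_periodic {f : ℝ → ℝ≥0∞} (hf : Function.Periodic f 1) (a b : ℝ) :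
    ∫⁻ x in Ioc a (a + 1), f x = ∫⁻ x in Ioc b (b + 1), f x := by
  refine (isAddFundamentalDomain_Ioc one_pos a).setLIntegral_eq
    (isAddFundamentalDomain_Ioc one_pos b) f ?_
  rintro ⟨_, k, rfl⟩ x
  have h_shift := hf.int_mul k x
  simpa [AddSubmonoid.vadd_def, AddSubgroup.vadd_def, add_comm] using h_shift

lemma setLIntegral_Ioc_add_left_of_periodic {f : ℝ → ℝ≥0∞} (hf : Function.Periodic f 1)
    (a b c : ℝ) : ∫⁻ x in Ioc a (a + 1), f (c + x) = ∫⁻ x in Ioc b (b + 1), f x :=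
  setLIntegral_Ioc_eq_of_periodic (f := fun x ↦ f (c + x))
    (fun x ↦ by dsimp only; rw [← add_assoc, hf]) a (b - c) |>.trans <| by
  have h := (measurePreserving_add_left volume c).setLIntegral_comp_preimage_emb
    (measurableEmbedding_addLeft c) f (Ioc b (b + 1))
  rwa [show (fun x ↦ c + x) ⁻¹' Ioc b (b + 1) = Ioc (b - c) (b - c + 1) by
    ext x; simp [sub_lt_iff_lt_add', sub_add_eq_add_sub, le_sub_iff_add_le']] at h

lemma setLIntegral_unitSq {G : ℝ × ℝ → ℝ≥0∞} (hG : Measurable G) :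
    ∫⁻ p in unitSq, G p = ∫⁻ y in Ioc (0 : ℝ) 1, ∫⁻ x in Ioc (0 : ℝ) 1, G (x, y) := by
  rw [unitSq, Measure.volume_eq_prod, ← Measure.prod_restrict,
    lintegral_prod_symm _ hG.aemeasurable]

lemma setLIntegral_unitSq_eq_centered {G : ℝ × ℝ → ℝ≥0∞} (hG : Measurable G)
    (hper : ∀ y, Function.Periodic (fun x ↦ G (x, y)) 1) :
    ∫⁻ p in unitSq, G p =
      ∫⁻ y in Ioc (0 : ℝ) 1, ∫⁻ z in Ioc (-(1 / 2) : ℝ) (1 / 2), G (y + z, y) := by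
  rw [setLIntegral_unitSq hG]
  congr 1 with y
  have h_shift := setLIntegral_Ioc_add_left_of_periodic (hper y) (-(1 / 2)) 0 y
  norm_num at h_shift ⊢
  exact h_shift.symm

end PeriodicIntegrals

section Hoelder

variable {X : Type*} [MeasurableSpace X] {m : Measure X} {q : ℝ}

lemma lintegral_le_rpow_lintegral_mul_measure_univ (hq : 1 ≤ q) {f : X → ℝ≥0∞}
    (hf : AEMeasurable f m) :
    ∫⁻ x, f x ∂m ≤ (∫⁻ x, f x ^ q ∂m) ^ (1 / q) * m univ ^ (1 - 1 / q) := by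
  simpa [eLpNorm'] using
    eLpNorm'_le_eLpNorm'_mul_rpow_measure_univ one_pos hq hf.aestronglyMeasurable

lemma ofReal_norm_rpow {E : Type*} [SeminormedAddCommGroup E] (hq : 0 ≤ q) (x : E) :
    ENNReal.ofReal (‖x‖ ^ q) = ‖x‖ₑ ^ q := by
  rw [← ENNReal.ofReal_rpow_of_nonneg (norm_nonneg x) hq, ofReal_norm]

lemma enorm_integral_rpow_le {E : Type*} [NormedAddCommGroup E] [NormedSpace ℝ E]
    [IsProbabilityMeasure m] (hq : 1 ≤ q) {h : X → E} (hh : AEStronglyMeasurable h m) :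
    ‖∫ x, h x ∂m‖ₑ ^ q ≤ ∫⁻ x, ‖h x‖ₑ ^ q ∂m := by
  have hq0 : 0 < q := by linarith
  calc ‖∫ x, h x ∂m‖ₑ ^ q
    _ ≤ (∫⁻ x, ‖h x‖ₑ ∂m) ^ q := by
        gcongr
        exact enorm_integral_le_lintegral_enorm h
    _ ≤ ((∫⁻ x, ‖h x‖ₑ ^ q ∂m) ^ (1 / q)) ^ q := by
        gcongr
        simpa using lintegral_le_rpow_lintegral_mul_measure_univ hq hh.enorm
    _ = ∫⁻ x, ‖h x‖ₑ ^ q ∂m := by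
        rw [← ENNReal.rpow_mul, one_div_mul_cancel hq0.ne', ENNReal.rpow_one]

instance isProbabilityMeasure_restrict_Ioc_zero_one :
    IsProbabilityMeasure (volume.restrict (Ioc (0 : ℝ) 1)) := ⟨by simp⟩

end Hoelder

section Dilation

variable {k : ℝ → ℝ≥0∞}

lemma setLIntegral_comp_mul_le (hk : Measurable k) {θ : ℝ} (hθ : θ ∈ Ioc (0 : ℝ) 1) :
    ∫⁻ z in Ioc (-(1 / 2) : ℝ) (1 / 2), k (θ * z) ≤
      ENNReal.ofReal θ⁻¹ * ∫⁻ z in Ioc (-(1 / 2) : ℝ) (1 / 2), k z := by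
  set S := Ioc (-(1 / 2) : ℝ) (1 / 2)
  have hS : MeasurableSet S := measurableSet_Ioc
  calc ∫⁻ z in S, k (θ * z)
    _ ≤ ∫⁻ z, S.indicator k (θ * z) := by
        rw [← lintegral_indicator hS]
        refine lintegral_mono <| indicator_le fun z hz ↦ ?_
        have h_mem : θ * z ∈ S :=
          ⟨by nlinarith [hz.1, hz.2, hθ.1, hθ.2], by nlinarith [hz.1, hz.2, hθ.1, hθ.2]⟩
        rw [indicator_of_mem h_mem]
    _ = ∫⁻ z, S.indicator k z ∂(Measure.map (θ * ·) volume) := by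
        rw [lintegral_map (hk.indicator hS) (by fun_prop)]
    _ = ENNReal.ofReal θ⁻¹ * ∫⁻ z in S, k z := by
        rw [Real.map_volume_mul_left hθ.1.ne', lintegral_smul_measure, lintegral_indicator hS,
          abs_of_pos (inv_pos.2 hθ.1), smul_eq_mul]

lemma lintegral_lintegral_rpow_mul_dilation_le (hk : Measurable k) {q : ℝ} (hq : 1 ≤ q) :
    ∫⁻ z in Ioc (-(1 / 2) : ℝ) (1 / 2), ∫⁻ θ in Ioc (0 : ℝ) 1,
      ENNReal.ofReal (θ ^ q) * k (θ * z) ≤ ∫⁻ z in Ioc (-(1 / 2) : ℝ) (1 / 2), k z := by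
  set I := ∫⁻ z in Ioc (-(1 / 2) : ℝ) (1 / 2), k z
  have slice_le {θ : ℝ} (hθ : θ ∈ Ioc (0 : ℝ) 1) :
      ∫⁻ z in Ioc (-(1 / 2) : ℝ) (1 / 2), ENNReal.ofReal (θ ^ q) * k (θ * z) ≤ I := by
    rw [lintegral_const_mul' _ _ ENNReal.ofReal_ne_top]
    calc ENNReal.ofReal (θ ^ q) * ∫⁻ z in Ioc (-(1 / 2) : ℝ) (1 / 2), k (θ * z)
      _ ≤ ENNReal.ofReal (θ ^ q) * (ENNReal.ofReal θ⁻¹ * I) := by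
          gcongr
          exact setLIntegral_comp_mul_le hk hθ
      _ ≤ 1 * I := by
          rw [← mul_assoc]
          gcongr
          rw [← ENNReal.ofReal_mul (Real.rpow_nonneg hθ.1.le _), ENNReal.ofReal_le_one,
            ← div_eq_mul_inv, div_le_one hθ.1]
          exact Real.rpow_le_self_of_le_one hθ.1.le hθ.2 hq
      _ = I := one_mul I
  calc _ = ∫⁻ θ in Ioc (0 : ℝ) 1, ∫⁻ z in Ioc (-(1 / 2) : ℝ) (1 / 2),
        ENNReal.ofReal (θ ^ q) * k (θ * z) := lintegral_lintegral_swap (by fun_prop)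
    _ ≤ ∫⁻ _ in Ioc (0 : ℝ) 1, I := setLIntegral_mono' measurableSet_Ioc fun θ hθ ↦ slice_le hθ
    _ = I := by simp

end Dilation

section Taylor

variable {E : Type*} [NormedAddCommGroup E] [NormedSpace ℝ E] {f : ℝ → E} {q : ℝ}

/-- The first-order Taylor remainder of `f` at `y`, along the shorter arc of the circle `ℝ/ℤ`
from `y` to `x`. -/
def taylorRem (f : ℝ → E) (x y : ℝ) : E := f x - f y - wrap (x - y) • deriv f y

lemma periodic_taylorRem_left (hper : Function.Periodic f 1) (y : ℝ) :
    Function.Periodic (taylorRem f · y) 1 := fun x ↦ by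
  simp only [taylorRem, hper x, add_sub_right_comm, periodic_wrap (x - y)]

lemma stronglyMeasurable_taylorRem (hf : ContDiff ℝ 1 f) :
    StronglyMeasurable fun p : ℝ × ℝ ↦ taylorRem f p.1 p.2 := by
  have hf' : Continuous (deriv f) := hf.continuous_deriv le_rfl
  have h_incr : Continuous fun p : ℝ × ℝ ↦ f p.1 - f p.2 := by fun_prop
  have h_arc : Measurable fun p : ℝ × ℝ ↦ wrap (p.1 - p.2) := by fun_prop
  exact h_incr.stronglyMeasurable.sub
    (h_arc.stronglyMeasurable.smul (hf'.comp continuous_snd).stronglyMeasurable)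

lemma taylorRem_eq_zero_of_deriv_eq_zero (hf : Differentiable ℝ f) (h : ∀ x, deriv f x = 0)
    (x y : ℝ) : taylorRem f x y = 0 := by
  rw [taylorRem, is_const_of_deriv_eq_zero hf h x y, h, smul_zero, sub_self, sub_zero]

variable [CompleteSpace E]

lemma sub_sub_smul_deriv_eq_integral (hf : ContDiff ℝ 1 f) (y z : ℝ) :
    f (y + z) - f y - z • deriv f y =
      ∫ θ in (0 : ℝ)..1, z • (deriv f (y + θ * z) - deriv f y) := by
  have h_deriv (θ : ℝ) : HasDerivAt (fun θ : ℝ ↦ f (y + θ * z) - θ • z • deriv f y)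
      (z • (deriv f (y + θ * z) - deriv f y)) θ := by
    have h_inner : HasDerivAt (fun θ : ℝ ↦ y + θ * z) z θ := by
      simpa using ((hasDerivAt_id θ).mul_const z).const_add y
    have h_outer : HasDerivAt f (deriv f (y + θ * z)) (y + θ * z) :=
      (hf.differentiable one_ne_zero _).hasDerivAt
    refine ((h_outer.scomp θ h_inner).sub
      ((hasDerivAt_id θ).smul_const (z • deriv f y))).congr_deriv ?_
    rw [one_smul, smul_sub]
  rw [intervalIntegral.integral_eq_sub_of_hasDerivAt (fun θ _ ↦ h_deriv θ)
    (Continuous.intervalIntegrable (by fun_prop) _ _)]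
  simp only [one_mul, one_smul, zero_mul, add_zero, zero_smul, sub_zero]
  exact sub_right_comm _ _ _

lemma ofReal_taylor_rpow_div_le (hf : ContDiff ℝ 1 f) (hq : 1 ≤ q) (y z : ℝ) :
    ENNReal.ofReal (‖f (y + z) - f y - z • deriv f y‖ ^ q / |z| ^ (2 * q)) ≤
      ∫⁻ θ in Ioc (0 : ℝ) 1, ENNReal.ofReal (θ ^ q) *
        ENNReal.ofReal (‖deriv f (y + θ * z) - deriv f y‖ ^ q / |θ * z| ^ q) := by
  have hq0 : 0 < q := by linarith
  rcases eq_or_ne z 0 with rfl | hz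
  · simp [Real.zero_rpow hq0.ne']
  have hz_pos : 0 < |z| := abs_pos.2 hz
  set Δ : ℝ → E := fun θ ↦ deriv f (y + θ * z) - deriv f y
  have hΔ : Continuous fun θ ↦ z • Δ θ := by fun_prop
  have jensen : ENNReal.ofReal (‖∫ θ in (0 : ℝ)..1, z • Δ θ‖ ^ q) ≤
      ∫⁻ θ in Ioc (0 : ℝ) 1, ENNReal.ofReal (‖z • Δ θ‖ ^ q) := by
    simp only [ofReal_norm_rpow hq0.le, intervalIntegral.integral_of_le zero_le_one]
    exact enorm_integral_rpow_le hq hΔ.aestronglyMeasurable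
  have rescale {θ : ℝ} (hθ : 0 < θ) : (|z| ^ (2 * q))⁻¹ * ‖z • Δ θ‖ ^ q =
      θ ^ q * (‖Δ θ‖ ^ q / |θ * z| ^ q) := by
    rw [norm_smul, Real.norm_eq_abs, abs_mul, abs_of_pos hθ,
      Real.mul_rpow (abs_nonneg _) (norm_nonneg _), Real.mul_rpow hθ.le (abs_nonneg _),
      two_mul, Real.rpow_add hz_pos]
    field_simp
  rw [sub_sub_smul_deriv_eq_integral hf, div_eq_inv_mul, ENNReal.ofReal_mul (by positivity)]
  refine (mul_le_mul_right jensen _).trans_eq ?_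
  rw [← lintegral_const_mul' _ _ ENNReal.ofReal_ne_top]
  refine setLIntegral_congr_fun measurableSet_Ioc fun θ hθ ↦ ?_
  have hθ_pos : 0 < θ := hθ.1
  rw [← ENNReal.ofReal_mul (by positivity), rescale hθ_pos, ENNReal.ofReal_mul (by positivity)]

lemma setLIntegral_taylorRem_rpow_div_le (hf : ContDiff ℝ 1 f) (hper : Function.Periodic f 1)
    (hq : 1 ≤ q) :
    ∫⁻ p in unitSq, ENNReal.ofReal (‖taylorRem f p.1 p.2‖ ^ q / circDist p.1 p.2 ^ (2 * q)) ≤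
      ∫⁻ p in unitSq,
        ENNReal.ofReal (‖deriv f p.1 - deriv f p.2‖ ^ q / circDist p.1 p.2 ^ q) := by
  have h_rem : Measurable fun p : ℝ × ℝ ↦ ‖taylorRem f p.1 p.2‖ :=
    (stronglyMeasurable_taylorRem hf).norm.measurable
  have h_incr : Measurable fun p : ℝ × ℝ ↦ ‖deriv f p.1 - deriv f p.2‖ :=
    Continuous.measurable (by fun_prop)
  rw [setLIntegral_unitSq_eq_centered (by fun_prop) fun y x ↦ by
      simp only [periodic_taylorRem_left hper y x, periodic_circDist_left y x],
    setLIntegral_unitSq_eq_centered (by fun_prop) fun y x ↦ by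
      simp only [periodic_deriv hper x, periodic_circDist_left y x]]
  refine lintegral_mono fun y ↦ ?_
  set k : ℝ → ℝ≥0∞ := fun z ↦ ENNReal.ofReal (‖deriv f (y + z) - deriv f y‖ ^ q / |z| ^ q)
  have hk : Measurable k := by
    have : Measurable fun z ↦ ‖deriv f (y + z) - deriv f y‖ := Continuous.measurable (by fun_prop)
    fun_prop
  have circDist_eq {z : ℝ} (hz : z ∈ Ioc (-(1 / 2) : ℝ) (1 / 2)) : circDist (y + z) y = |z| := by
    rw [circDist_eq_abs_sub (by rwa [add_sub_cancel_left]), add_sub_cancel_left]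
  calc _ ≤ ∫⁻ z in Ioc (-(1 / 2) : ℝ) (1 / 2), ∫⁻ θ in Ioc (0 : ℝ) 1,
        ENNReal.ofReal (θ ^ q) * k (θ * z) := by
        refine setLIntegral_mono' measurableSet_Ioc fun z hz ↦ ?_
        rw [circDist_eq hz, taylorRem, add_sub_cancel_left, wrap_eq_self hz]
        exact ofReal_taylor_rpow_div_le hf hq y z
    _ ≤ ∫⁻ z in Ioc (-(1 / 2) : ℝ) (1 / 2), k z := lintegral_lintegral_rpow_mul_dilation_le hk hq
    _ = _ := setLIntegral_congr_fun measurableSet_Ioc fun z hz ↦ by simp only [k, circDist_eq hz]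

end Taylor

section Gagliardo

variable {E : Type*} [NormedAddCommGroup E] {h g : ℝ → E} {q : ℝ}

/-- The slice at `r` of the Gagliardo double integral of `|h t - h r|^q / |t - r|^q`, which is the
`q`-th power of the seminorm of `W^{1-1/q,q}` on the unit interval. -/
def gagliardoSlice (q : ℝ) (h : ℝ → E) (r : ℝ) : ℝ≥0∞ :=
  ∫⁻ t in Ioc (0 : ℝ) 1, ENNReal.ofReal (‖h t - h r‖ ^ q / |t - r| ^ q)

lemma measurable_gagliardoSlice (hh : Continuous h) : Measurable (gagliardoSlice q h) := by
  have : Measurable fun p : ℝ × ℝ ↦ ‖h p.2 - h p.1‖ := Continuous.measurable (by fun_prop)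
  exact Measurable.lintegral_prod_right'
    (f := fun p : ℝ × ℝ ↦ ENNReal.ofReal (‖h p.2 - h p.1‖ ^ q / |p.2 - p.1| ^ q)) (by fun_prop)

lemma norm_sub_rpow_div_abs_sub_le (hper : Function.Periodic g 1) (hq : 0 < q) (x y : ℝ) :
    ‖g x - g y‖ ^ q / |x - y| ^ q ≤ ‖g x - g y‖ ^ q / circDist x y ^ q := by
  rcases eq_or_lt_of_le (circDist_nonneg x y) with h_dist | h_dist
  · rw [apply_eq_of_circDist_eq_zero hper h_dist.symm, sub_self, norm_zero,
      Real.zero_rpow hq.ne', zero_div, zero_div]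
  · gcongr
    exact circDist_le_abs_sub x y

lemma lintegral_gagliardoSlice_translate_le (hg : Continuous g) (hper : Function.Periodic g 1)
    (hq : 0 < q) (x : ℝ) :
    ∫⁻ r in Ioc (0 : ℝ) 1, gagliardoSlice q (fun t ↦ g (x + t)) r ≤
      ∫⁻ p in unitSq, ENNReal.ofReal (‖g p.1 - g p.2‖ ^ q / circDist p.1 p.2 ^ q) := by
  have h_norm : Measurable fun p : ℝ × ℝ ↦ ‖g p.1 - g p.2‖ := Continuous.measurable (by fun_prop)
  set k : ℝ → ℝ → ℝ≥0∞ := fun z y ↦ ENNReal.ofReal (‖g z - g y‖ ^ q / circDist z y ^ q)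
  have periodic_left (y : ℝ) : Function.Periodic (k · y) 1 := fun z ↦ by
    simp only [k, hper z, periodic_circDist_left y z]
  have periodic_right (z : ℝ) : Function.Periodic (k z) 1 := fun y ↦ by
    simp only [k, hper y, periodic_circDist_right z y]
  have shift_left (y : ℝ) : ∫⁻ t in Ioc (0 : ℝ) 1, k (x + t) y = ∫⁻ z in Ioc (0 : ℝ) 1, k z y := by
    simpa using setLIntegral_Ioc_add_left_of_periodic (periodic_left y) 0 0 x
  have shift_right : ∫⁻ r in Ioc (0 : ℝ) 1, ∫⁻ z in Ioc (0 : ℝ) 1, k z (x + r) =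
      ∫⁻ y in Ioc (0 : ℝ) 1, ∫⁻ z in Ioc (0 : ℝ) 1, k z y := by
    simpa using setLIntegral_Ioc_add_left_of_periodic
      (f := fun y ↦ ∫⁻ z in Ioc (0 : ℝ) 1, k z y)
      (fun y ↦ by simp only [periodic_right _ y]) 0 0 x
  rw [setLIntegral_unitSq (by fun_prop)]
  refine le_of_le_of_eq ?_ shift_right
  refine lintegral_mono fun r ↦ le_of_le_of_eq ?_ (shift_left (x + r))
  refine lintegral_mono fun t ↦ ENNReal.ofReal_le_ofReal ?_
  simpa using norm_sub_rpow_div_abs_sub_le hper hq (x + t) (x + r)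

end Gagliardo

section Morrey

variable {E : Type*} [NormedAddCommGroup E] [NormedSpace ℝ E] {h g : ℝ → E} {q r : ℝ}

/-- The mean value of `h` over the interval `[0, r]`. -/
def initialMean (h : ℝ → E) (r : ℝ) : E := r⁻¹ • ∫ t in (0 : ℝ)..r, h t

/-- The derivative of `initialMean h` at `r`. -/
def initialMeanDeriv (h : ℝ → E) (r : ℝ) : E := (r ^ 2)⁻¹ • ∫ t in (0 : ℝ)..r, (h r - h t)

/-- The constant of Morrey's inequality `‖h‖_∞ ≤ C ‖h‖_{W^{1-1/q,q}}` for `q > 2`; it is the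
`L^{q'}` norm of `r ↦ r ^ (-1/q)` on `(0, 1)`, where `1/q + 1/q' = 1`. -/
def morreyConst (q : ℝ) : ℝ := ((q - 1) / (q - 2)) ^ ((q - 1) / q)

lemma one_le_morreyConst (hq : 2 < q) : 1 ≤ morreyConst q := by
  have h_base : 1 ≤ (q - 1) / (q - 2) := by
    rw [one_le_div (by linarith)]
    linarith
  exact Real.one_le_rpow h_base (div_nonneg (by linarith) (by linarith))

lemma continuousOn_initialMeanDeriv (hh : Continuous h) :
    ContinuousOn (initialMeanDeriv h) (Ioi 0) := by
  have h_int : Continuous fun r : ℝ ↦ ∫ t in (0 : ℝ)..r, (h r - h t) :=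
    intervalIntegral.continuous_parametric_intervalIntegral_of_continuous (by fun_prop)
      continuous_id
  exact (ContinuousOn.inv₀ (by fun_prop) fun r hr ↦ pow_ne_zero 2 (ne_of_gt hr)).smul
    h_int.continuousOn

lemma enorm_initialMeanDeriv_le_lintegral (h : ℝ → E) (hr : 0 < r) :
    ‖initialMeanDeriv h r‖ₑ ≤
      ∫⁻ t in Ioc 0 r, ENNReal.ofReal r⁻¹ * ENNReal.ofReal (‖h t - h r‖ / |t - r|) := by
  rw [initialMeanDeriv, intervalIntegral.integral_of_le hr.le, ← integral_smul]
  refine (enorm_integral_le_lintegral_enorm _).trans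
    (setLIntegral_mono' measurableSet_Ioc fun t ht ↦ ?_)
  rw [← ofReal_norm, ← ENNReal.ofReal_mul (by positivity), norm_smul, norm_sub_rev,
    Real.norm_of_nonneg (by positivity), sq, mul_inv, mul_assoc, inv_mul_eq_div r ‖_‖]
  apply ENNReal.ofReal_le_ofReal
  rcases eq_or_lt_of_le ht.2 with rfl | htr
  · simp
  · have dist_eq : |t - r| = r - t := by rw [abs_sub_comm, abs_of_pos (sub_pos.2 htr)]
    have dist_pos : 0 < |t - r| := dist_eq ▸ sub_pos.2 htr
    have dist_le : |t - r| ≤ r := by linarith [ht.1]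
    gcongr

lemma enorm_initialMeanDeriv_le (hh : Continuous h) (hq : 1 ≤ q) (hr : r ∈ Ioc (0 : ℝ) 1) :
    ‖initialMeanDeriv h r‖ₑ ≤
      ENNReal.ofReal (r ^ (-(1 / q))) * gagliardoSlice q h r ^ (1 / q) := by
  have hr_pos : 0 < r := hr.1
  set F : ℝ → ℝ≥0∞ := fun t ↦ ENNReal.ofReal (‖h t - h r‖ / |t - r|)
  have hF : Measurable F := by fun_prop
  have hF_rpow (t : ℝ) : F t ^ q = ENNReal.ofReal (‖h t - h r‖ ^ q / |t - r| ^ q) := by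
    rw [ENNReal.ofReal_rpow_of_nonneg (by positivity) (by linarith),
      Real.div_rpow (norm_nonneg _) (abs_nonneg _)]
  have hoelder : ∫⁻ t in Ioc 0 r, F t ≤
      gagliardoSlice q h r ^ (1 / q) * ENNReal.ofReal r ^ (1 - 1 / q) := by
    calc ∫⁻ t in Ioc 0 r, F t
      _ ≤ (∫⁻ t in Ioc 0 r, F t ^ q) ^ (1 / q) * ENNReal.ofReal r ^ (1 - 1 / q) := by
          simpa using lintegral_le_rpow_lintegral_mul_measure_univ
            (m := volume.restrict (Ioc 0 r)) hq hF.aemeasurable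
      _ ≤ gagliardoSlice q h r ^ (1 / q) * ENNReal.ofReal r ^ (1 - 1 / q) := by
          simp only [hF_rpow]
          gcongr
          exact lintegral_mono_set (Ioc_subset_Ioc_right hr.2)
  calc ‖initialMeanDeriv h r‖ₑ
    _ ≤ ENNReal.ofReal r⁻¹ * ∫⁻ t in Ioc 0 r, F t := by
        rw [← lintegral_const_mul _ hF]
        exact enorm_initialMeanDeriv_le_lintegral h hr_pos
    _ ≤ ENNReal.ofReal r⁻¹ *
          (gagliardoSlice q h r ^ (1 / q) * ENNReal.ofReal r ^ (1 - 1 / q)) := by gcongr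
    _ = ENNReal.ofReal (r ^ (-(1 / q))) * gagliardoSlice q h r ^ (1 / q) := by
        rw [ENNReal.ofReal_rpow_of_pos hr_pos, mul_left_comm, mul_comm,
          ← ENNReal.ofReal_mul (by positivity), ← Real.rpow_neg_one, ← Real.rpow_add hr_pos]
        congr 3
        ring

lemma lintegral_rpow_neg_rpow (hq : 2 < q) :
    ∫⁻ r in Ioc (0 : ℝ) 1, ENNReal.ofReal (r ^ (-(1 / q))) ^ (q / (q - 1)) =
      ENNReal.ofReal ((q - 1) / (q - 2)) := by
  have h_exp : -1 < -(1 / (q - 1)) := by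
    rw [neg_lt_neg_iff, div_lt_one (by linarith)]
    linarith
  have h_int := intervalIntegral.intervalIntegrable_rpow' (a := 0) (b := 1) h_exp
  rw [intervalIntegrable_iff_integrableOn_Ioc_of_le zero_le_one] at h_int
  calc _ = ∫⁻ r in Ioc (0 : ℝ) 1, ENNReal.ofReal (r ^ (-(1 / (q - 1)))) := by
        refine setLIntegral_congr_fun measurableSet_Ioc fun r hr ↦ ?_
        rw [ENNReal.ofReal_rpow_of_nonneg (Real.rpow_nonneg hr.1.le _)
          (div_nonneg (by linarith) (by linarith)), ← Real.rpow_mul hr.1.le]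
        congr 2
        field_simp
    _ = ENNReal.ofReal (∫ r in (0 : ℝ)..1, r ^ (-(1 / (q - 1)))) := by
        rw [intervalIntegral.integral_of_le zero_le_one, ofReal_integral_eq_lintegral_ofReal h_int]
        filter_upwards [ae_restrict_mem measurableSet_Ioc] with r hr
        exact Real.rpow_nonneg hr.1.le _
    _ = ENNReal.ofReal ((q - 1) / (q - 2)) := by
        rw [integral_rpow (Or.inl h_exp), Real.one_rpow, Real.zero_rpow (by linarith)]
        congr 1
        have h1 : q - 1 ≠ 0 := by linarith
        rw [sub_zero, neg_add_eq_sub, one_sub_div h1, one_div_div]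
        ring

lemma lintegral_enorm_initialMeanDeriv_le (hh : Continuous h) (hq : 2 < q) :
    ∫⁻ r in Ioc (0 : ℝ) 1, ‖initialMeanDeriv h r‖ₑ ≤
      ENNReal.ofReal (morreyConst q) *
        (∫⁻ r in Ioc (0 : ℝ) 1, gagliardoSlice q h r) ^ (1 / q) := by
  have hpq : (q / (q - 1)).HolderConjugate q :=
    (Real.HolderConjugate.conjExponent (by linarith)).symm
  have h_slice := measurable_gagliardoSlice (q := q) hh
  calc _ ≤ ∫⁻ r in Ioc (0 : ℝ) 1,
        ENNReal.ofReal (r ^ (-(1 / q))) * gagliardoSlice q h r ^ (1 / q) :=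
        setLIntegral_mono' measurableSet_Ioc fun r hr ↦
          enorm_initialMeanDeriv_le hh (by linarith) hr
    _ ≤ (∫⁻ r in Ioc (0 : ℝ) 1, ENNReal.ofReal (r ^ (-(1 / q))) ^ (q / (q - 1))) ^
          (1 / (q / (q - 1))) *
        (∫⁻ r in Ioc (0 : ℝ) 1, (gagliardoSlice q h r ^ (1 / q)) ^ q) ^ (1 / q) :=
        ENNReal.lintegral_mul_le_Lp_mul_Lq _ hpq (by fun_prop) (by fun_prop)
    _ = _ := by
        rw [lintegral_rpow_neg_rpow hq, one_div_div, morreyConst, ENNReal.ofReal_rpow_of_nonneg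
          (div_nonneg (by linarith) (by linarith)) (div_nonneg (by linarith) (by linarith))]
        simp only [← ENNReal.rpow_mul, one_div_mul_cancel (show q ≠ 0 by linarith),
          ENNReal.rpow_one]

variable [CompleteSpace E]

lemma hasDerivAt_initialMean (hh : Continuous h) (hr : r ≠ 0) :
    HasDerivAt (initialMean h) (initialMeanDeriv h r) r := by
  have h_prim : HasDerivAt (fun r : ℝ ↦ ∫ t in (0 : ℝ)..r, h t) (h r) r :=
    intervalIntegral.integral_hasDerivAt_right (hh.intervalIntegrable _ _)
      (hh.stronglyMeasurableAtFilter _ _) hh.continuousAt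
  refine ((hasDerivAt_inv hr).smul h_prim).congr_deriv ?_
  rw [initialMeanDeriv, intervalIntegral.integral_sub intervalIntegrable_const
    (hh.intervalIntegrable _ _), intervalIntegral.integral_const, sub_zero, smul_sub, smul_smul,
    neg_smul, sub_eq_add_neg]
  congr 2
  field_simp

lemma tendsto_initialMean (hh : Continuous h) :
    Tendsto (initialMean h) (𝓝[>] 0) (𝓝 (h 0)) := by
  have h_prim : HasDerivAt (fun r : ℝ ↦ ∫ t in (0 : ℝ)..r, h t) (h 0) 0 :=
    intervalIntegral.integral_hasDerivAt_right (hh.intervalIntegrable _ _)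
      (hh.stronglyMeasurableAtFilter _ _) hh.continuousAt
  have h_sub : Ioi (0 : ℝ) ⊆ {0}ᶜ := fun x hx ↦ ne_of_gt hx
  refine ((hasDerivAt_iff_tendsto_slope.1 h_prim).mono_left (nhdsWithin_mono 0 h_sub)).congr
    fun r ↦ ?_
  simp [slope_def_module, initialMean]

lemma enorm_initialMean_one_sub_le (hh : Continuous h) :
    ‖initialMean h 1 - h 0‖ₑ ≤ ∫⁻ r in Ioc (0 : ℝ) 1, ‖initialMeanDeriv h r‖ₑ := by
  have h_lim : Tendsto (fun ε ↦ ‖initialMean h 1 - initialMean h ε‖ₑ) (𝓝[>] 0)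
      (𝓝 ‖initialMean h 1 - h 0‖ₑ) :=
    (tendsto_const_nhds.sub (tendsto_initialMean hh)).enorm
  refine le_of_tendsto h_lim ?_
  filter_upwards [Ioc_mem_nhdsGT zero_lt_one] with ε hε
  have h_sub : uIcc ε 1 ⊆ Ioi 0 := by
    rw [uIcc_of_le hε.2]
    exact fun r hr ↦ hε.1.trans_le hr.1
  rw [← intervalIntegral.integral_eq_sub_of_hasDerivAt
    (fun r hr ↦ hasDerivAt_initialMean hh (h_sub hr).ne')
    ((continuousOn_initialMeanDeriv hh).mono h_sub).intervalIntegrable,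
    intervalIntegral.integral_of_le hε.2]
  exact (enorm_integral_le_lintegral_enorm _).trans
    (lintegral_mono_set (Ioc_subset_Ioc_left hε.1.le))

lemma enorm_apply_zero_le (hh : Continuous h) (hq : 2 < q) :
    ‖h 0‖ₑ ≤ (∫⁻ t in Ioc (0 : ℝ) 1, ‖h t‖ₑ ^ q) ^ (1 / q) +
      ENNReal.ofReal (morreyConst q) *
        (∫⁻ r in Ioc (0 : ℝ) 1, gagliardoSlice q h r) ^ (1 / q) := by
  have mean_le : ‖initialMean h 1‖ₑ ≤ (∫⁻ t in Ioc (0 : ℝ) 1, ‖h t‖ₑ ^ q) ^ (1 / q) := by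
    rw [initialMean, inv_one, one_smul, intervalIntegral.integral_of_le zero_le_one, one_div,
      ENNReal.le_rpow_inv_iff (by linarith)]
    exact enorm_integral_rpow_le (by linarith) hh.aestronglyMeasurable
  calc ‖h 0‖ₑ = ‖initialMean h 1 - (initialMean h 1 - h 0)‖ₑ := by rw [sub_sub_cancel]
    _ ≤ ‖initialMean h 1‖ₑ + ‖initialMean h 1 - h 0‖ₑ := enorm_sub_le
    _ ≤ _ := add_le_add mean_le <| (enorm_initialMean_one_sub_le hh).trans
        (lintegral_enorm_initialMeanDeriv_le hh hq)

lemma enorm_le_of_periodic (hg : Continuous g) (hper : Function.Periodic g 1) (hq : 2 < q)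
    (x : ℝ) :
    ‖g x‖ₑ ≤ (∫⁻ t in Ioc (0 : ℝ) 1, ‖g t‖ₑ ^ q) ^ (1 / q) +
      ENNReal.ofReal (morreyConst q) * (∫⁻ p in unitSq,
        ENNReal.ofReal (‖g p.1 - g p.2‖ ^ q / circDist p.1 p.2 ^ q)) ^ (1 / q) := by
  have h_shift := setLIntegral_Ioc_add_left_of_periodic (f := fun t ↦ ‖g t‖ₑ ^ q)
    (fun t ↦ by simp only [hper t]) 0 0 x
  rw [zero_add] at h_shift
  have h_morrey := enorm_apply_zero_le (h := fun t ↦ g (x + t)) (by fun_prop) hq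
  rw [add_zero, h_shift] at h_morrey
  refine h_morrey.trans ?_
  gcongr
  exact lintegral_gagliardoSlice_translate_le hg hper (by linarith) x

end Morrey

section Curves

variable {n : ℕ} {q : ℝ} {f u : ℝ → EuclideanSpace ℝ (Fin n)}

lemma norm_sub_le_mul_circDist (hf : Differentiable ℝ f) (hper : Function.Periodic f 1) {M : ℝ}
    (hM : ∀ x, ‖deriv f x‖ ≤ M) (x y : ℝ) : ‖f x - f y‖ ≤ M * circDist x y := by
  rw [apply_eq_apply_add_wrap_sub hper x y, circDist_eq_abs_wrap]
  simpa using Convex.norm_image_sub_le_of_norm_deriv_le (fun z _ ↦ hf z) (fun z _ ↦ hM z)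
    convex_univ (mem_univ y) (mem_univ (y + wrap (x - y)))

lemma circDist_le_bil_mul (hbil : bil u < ⊤) (x y : ℝ) :
    circDist x y ≤ (bil u).toReal * ‖u x - u y‖ := by
  rcases (circDist_nonneg x y).eq_or_lt with h_dist | h_dist
  · rw [← h_dist]
    positivity
  have quotient_le : ENNReal.ofReal (circDist x y) / ENNReal.ofReal ‖u x - u y‖ ≤ bil u :=
    le_iSup_of_le x (le_iSup_of_le y (le_iSup_of_le h_dist.ne' le_rfl))
  have chord_pos : 0 < ‖u x - u y‖ := by
    by_contra h_chord
    rw [ENNReal.ofReal_of_nonpos (not_lt.1 h_chord), ENNReal.div_zero (by simpa using h_dist)]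
      at quotient_le
    exact hbil.not_ge quotient_le
  rwa [← ENNReal.ofReal_div_of_pos chord_pos, ENNReal.ofReal_le_iff_le_toReal hbil.ne,
    div_le_iff₀ chord_pos] at quotient_le

lemma one_le_bil_mul_norm_deriv (hu : Differentiable ℝ u) (hbil : bil u < ⊤) (y : ℝ) :
    1 ≤ (bil u).toReal * ‖deriv u y‖ := by
  have h_slope := (hasDerivAt_iff_tendsto_slope.1 (hu y).hasDerivAt).norm
  refine ge_of_tendsto (h_slope.const_mul _) ?_
  filter_upwards [nhdsWithin_le_nhds (Metric.ball_mem_nhds y one_half_pos), self_mem_nhdsWithin]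
    with x hx hxy
  have dist_pos : 0 < |x - y| := abs_pos.2 (sub_ne_zero.2 hxy)
  have dist_lt := abs_lt.1 (show |x - y| < 1 / 2 from hx)
  have dist_le := circDist_le_bil_mul hbil x y
  rw [circDist_eq_abs_sub ⟨dist_lt.1, dist_lt.2.le⟩] at dist_le
  rw [slope_def_module, norm_smul, norm_inv, Real.norm_eq_abs, mul_left_comm, inv_mul_eq_div]
  exact (one_le_div dist_pos).2 dist_le

lemma bil_toReal_pos (hu : Differentiable ℝ u) (hbil : bil u < ⊤) : 0 < (bil u).toReal :=
  pos_of_mul_pos_left (one_pos.trans_le (one_le_bil_mul_norm_deriv hu hbil 0)) (norm_nonneg _)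

lemma norm_deriv_le_linfD_of_forall_le {M : ℝ} (hM : ∀ x, ‖deriv u x‖ ≤ M) (x : ℝ) :
    ‖deriv u x‖ ≤ (linfD u).toReal := by
  have linfD_le : linfD u ≤ ENNReal.ofReal M := iSup_le fun y ↦ by
    rw [← ENNReal.ofReal_coe_nnreal, coe_nnnorm]
    exact ENNReal.ofReal_le_ofReal (hM y)
  simpa using ENNReal.toReal_mono (linfD_le.trans_lt ENNReal.ofReal_lt_top).ne
    (le_iSup (fun y ↦ (‖deriv u y‖₊ : ℝ≥0∞)) x)

lemma sobSemPow_one_sub_inv (hq : q ≠ 0) (f : ℝ → EuclideanSpace ℝ (Fin n)) :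
    sobSemPow (1 - 1 / q) q f =
      ∫⁻ p in unitSq, ENNReal.ofReal (‖f p.1 - f p.2‖ ^ q / circDist p.1 p.2 ^ q) := by
  have h_exp : 1 + (1 - 1 / q) * q = q := by
    field_simp
    ring
  rw [sobSemPow, h_exp]

lemma Wnorm_nonneg (s q : ℝ) (f : ℝ → EuclideanSpace ℝ (Fin n)) : 0 ≤ Wnorm s q f := by
  unfold Wnorm
  positivity

lemma sobSemPow_le_ofReal_rpow_Wnorm {s : ℝ} (hq : 0 < q) (hs : sobSemPow s q f < ⊤) :
    sobSemPow s q f ≤ ENNReal.ofReal (Wnorm s q f ^ q) := by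
  rw [ENNReal.le_ofReal_iff_toReal_le hs.ne (Real.rpow_nonneg (Wnorm_nonneg s q f) q)]
  calc (sobSemPow s q f).toReal = ((sobSemPow s q f).toReal ^ (1 / q)) ^ q := by
        rw [← Real.rpow_mul ENNReal.toReal_nonneg, one_div_mul_cancel hq.ne', Real.rpow_one]
    _ ≤ Wnorm s q f ^ q := by
        gcongr
        exact le_add_of_nonneg_left (by positivity)

lemma le_Wnorm_of_forall_le_norm {s c : ℝ} (hq : 0 < q) (hf : Continuous f) (hc : 0 ≤ c)
    (h : ∀ x, c ≤ ‖f x‖) : c ≤ Wnorm s q f := by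
  have h_cont : Continuous fun t ↦ ‖f t‖ ^ q := hf.norm.rpow_const fun _ ↦ Or.inr hq.le
  have h_int : IntegrableOn (fun t ↦ ‖f t‖ ^ q) (Ioc 0 1) :=
    h_cont.integrableOn_Icc.mono_set Ioc_subset_Icc_self
  calc c = (∫ _ in Ioc (0 : ℝ) 1, c ^ q) ^ (1 / q) := by
        simp [← Real.rpow_mul hc, hq.ne']
    _ ≤ (∫ x in Ioc (0 : ℝ) 1, ‖f x‖ ^ q) ^ (1 / q) := by
        refine Real.rpow_le_rpow (by positivity) ?_ (by positivity)
        exact setIntegral_mono (integrableOn_const (by simp)) h_int fun x ↦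
          Real.rpow_le_rpow hc (h x) hq.le
    _ ≤ Wnorm s q f := le_add_of_nonneg_right (by positivity)

end Curves

section SobolevLoop

variable {n : ℕ} {q : ℝ} {f u : ℝ → EuclideanSpace ℝ (Fin n)}

/-- A closed `C¹` curve, parametrised over `ℝ/ℤ`, whose derivative has a finite
`W^{1-1/q,q}`-seminorm. -/
structure IsSobolevLoop (q : ℝ) (f : ℝ → EuclideanSpace ℝ (Fin n)) : Prop where
  contDiff : ContDiff ℝ 1 f
  periodic : Function.Periodic f 1
  sobSemPow_lt_top : sobSemPow (1 - 1 / q) q (deriv f) < ⊤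

/-- The norm `‖f'‖_{W^{1-1/q,q}}` of a curve `f`. -/
def derivNorm (q : ℝ) (f : ℝ → EuclideanSpace ℝ (Fin n)) : ℝ := Wnorm (1 - 1 / q) q (deriv f)

lemma derivNorm_nonneg (q : ℝ) (f : ℝ → EuclideanSpace ℝ (Fin n)) : 0 ≤ derivNorm q f :=
  Wnorm_nonneg _ _ _

lemma taylorRem_div_derivNorm_nonneg (q : ℝ) (f : ℝ → EuclideanSpace ℝ (Fin n)) (p : ℝ × ℝ) :
    0 ≤ ‖taylorRem f p.1 p.2‖ / derivNorm q f :=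
  div_nonneg (norm_nonneg _) (derivNorm_nonneg q f)

namespace IsSobolevLoop

lemma differentiable (hf : IsSobolevLoop q f) : Differentiable ℝ f :=
  hf.contDiff.differentiable one_ne_zero

lemma continuous_deriv (hf : IsSobolevLoop q f) : Continuous (deriv f) :=
  hf.contDiff.continuous_deriv le_rfl

lemma norm_deriv_le_morreyConst_mul (hf : IsSobolevLoop q f) (hq : 2 < q) (x : ℝ) :
    ‖deriv f x‖ ≤ morreyConst q * derivNorm q f := by
  have hq0 : 0 < q := by linarith
  have one_le_const := one_le_morreyConst hq
  have h_cont : Continuous fun t ↦ ‖deriv f t‖ ^ q :=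
    hf.continuous_deriv.norm.rpow_const fun _ ↦ Or.inr hq0.le
  have h_int : IntegrableOn (fun t ↦ ‖deriv f t‖ ^ q) (Ioc 0 1) :=
    h_cont.integrableOn_Icc.mono_set Ioc_subset_Icc_self
  have morrey := enorm_le_of_periodic hf.continuous_deriv (periodic_deriv hf.periodic) hq x
  simp only [← ofReal_norm_rpow hq0.le] at morrey
  rw [← sobSemPow_one_sub_inv hq0.ne',
    ← ofReal_integral_eq_lintegral_ofReal h_int (ae_of_all _ fun t ↦ by positivity),
    ← ENNReal.ofReal_toReal hf.sobSemPow_lt_top.ne,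
    ENNReal.ofReal_rpow_of_nonneg (by positivity) (by positivity),
    ENNReal.ofReal_rpow_of_nonneg (by positivity) (by positivity),
    ← ENNReal.ofReal_mul (by positivity), ← ENNReal.ofReal_add (by positivity) (by positivity),
    ← ofReal_norm, ENNReal.ofReal_le_ofReal_iff (by positivity)] at morrey
  refine morrey.trans ?_
  rw [derivNorm, Wnorm, mul_add]
  gcongr
  exact le_mul_of_one_le_left (by positivity) one_le_const

lemma norm_deriv_le_linfD (hf : IsSobolevLoop q f) (hq : 2 < q) (x : ℝ) :
    ‖deriv f x‖ ≤ (linfD f).toReal :=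
  norm_deriv_le_linfD_of_forall_le (hf.norm_deriv_le_morreyConst_mul hq) x

lemma one_le_bil_mul_linfD (hu : IsSobolevLoop q u) (hq : 2 < q) (hbil : bil u < ⊤) :
    1 ≤ (bil u).toReal * (linfD u).toReal :=
  (one_le_bil_mul_norm_deriv hu.differentiable hbil 0).trans <| by
    gcongr
    exact hu.norm_deriv_le_linfD hq 0

lemma one_le_bil_mul_derivNorm (hu : IsSobolevLoop q u) (hq : 0 < q) (hbil : bil u < ⊤) :
    1 ≤ (bil u).toReal * derivNorm q u := by
  have bil_pos := bil_toReal_pos hu.differentiable hbil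
  rw [← inv_le_iff_one_le_mul₀' bil_pos]
  exact le_Wnorm_of_forall_le_norm hq hu.continuous_deriv (by positivity) fun x ↦
    (inv_le_iff_one_le_mul₀' bil_pos).2 (one_le_bil_mul_norm_deriv hu.differentiable hbil x)

lemma taylorRem_eq_zero (hf : IsSobolevLoop q f) (hq : 2 < q) (h : derivNorm q f = 0) (x y : ℝ) :
    taylorRem f x y = 0 :=
  taylorRem_eq_zero_of_deriv_eq_zero hf.differentiable (fun z ↦ norm_le_zero_iff.1 <| by
    simpa [h] using hf.norm_deriv_le_morreyConst_mul hq z) x y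

lemma lintegral_taylorRem_div_derivNorm_le (hf : IsSobolevLoop q f) (hq : 1 ≤ q) :
    ∫⁻ p in unitSq, ENNReal.ofReal
      ((‖taylorRem f p.1 p.2‖ / derivNorm q f) ^ q / circDist p.1 p.2 ^ (2 * q)) ≤ 1 := by
  have hq0 : 0 < q := by linarith
  have h_norm := derivNorm_nonneg q f
  calc ∫⁻ p in unitSq, ENNReal.ofReal
        ((‖taylorRem f p.1 p.2‖ / derivNorm q f) ^ q / circDist p.1 p.2 ^ (2 * q))
    _ = ENNReal.ofReal (derivNorm q f ^ q)⁻¹ * ∫⁻ p in unitSq, ENNReal.ofReal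
          (‖taylorRem f p.1 p.2‖ ^ q / circDist p.1 p.2 ^ (2 * q)) := by
        rw [← lintegral_const_mul' _ _ ENNReal.ofReal_ne_top]
        congr 1 with p
        rw [← ENNReal.ofReal_mul (by positivity), Real.div_rpow (norm_nonneg _) h_norm,
          div_right_comm, inv_mul_eq_div]
    _ ≤ ENNReal.ofReal (derivNorm q f ^ q)⁻¹ * ENNReal.ofReal (derivNorm q f ^ q) := by
        gcongr
        refine (setLIntegral_taylorRem_rpow_div_le hf.contDiff hf.periodic hq).trans ?_
        rw [← sobSemPow_one_sub_inv hq0.ne']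
        exact sobSemPow_le_ofReal_rpow_Wnorm hq0 hf.sobSemPow_lt_top
    _ ≤ 1 := by
        rw [← ENNReal.ofReal_mul (by positivity), ENNReal.ofReal_le_one]
        exact inv_mul_le_one

end IsSobolevLoop

end SobolevLoop

section TaylorWeight

variable {n : ℕ} {q : ℝ} {ι : Type*} [Fintype ι] {f : ι → ℝ → EuclideanSpace ℝ (Fin n)}

/-- A common bound for the Taylor remainders of finitely many curves, each measured in units of
its norm `derivNorm q (f i)`; a curve with `derivNorm q (f i) = 0` contributes `x / 0 = 0`. -/
def taylorWeight (q : ℝ) (f : ι → ℝ → EuclideanSpace ℝ (Fin n)) (p : ℝ × ℝ) : ℝ :=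
  (∑ i, (‖taylorRem (f i) p.1 p.2‖ / derivNorm q (f i)) ^ q) ^ (1 / q)

lemma sum_taylorRem_rpow_nonneg (p : ℝ × ℝ) :
    0 ≤ ∑ i, (‖taylorRem (f i) p.1 p.2‖ / derivNorm q (f i)) ^ q :=
  Finset.sum_nonneg fun i _ ↦ Real.rpow_nonneg (taylorRem_div_derivNorm_nonneg q (f i) p) q

lemma taylorWeight_nonneg (p : ℝ × ℝ) : 0 ≤ taylorWeight q f p :=
  Real.rpow_nonneg (sum_taylorRem_rpow_nonneg p) _

lemma taylorWeight_rpow (hq : q ≠ 0) (p : ℝ × ℝ) :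
    taylorWeight q f p ^ q = ∑ i, (‖taylorRem (f i) p.1 p.2‖ / derivNorm q (f i)) ^ q := by
  rw [taylorWeight, ← Real.rpow_mul (sum_taylorRem_rpow_nonneg p), one_div_mul_cancel hq,
    Real.rpow_one]

lemma norm_taylorRem_le_mul_taylorWeight (hf : ∀ i, IsSobolevLoop q (f i)) (hq : 2 < q) (i : ι)
    (p : ℝ × ℝ) : ‖taylorRem (f i) p.1 p.2‖ ≤ derivNorm q (f i) * taylorWeight q f p := by
  have hq0 : 0 < q := by linarith
  rcases (derivNorm_nonneg q (f i)).eq_or_lt with h_norm | h_norm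
  · rw [(hf i).taylorRem_eq_zero hq h_norm.symm, norm_zero, ← h_norm, zero_mul]
  · rw [← div_le_iff₀' h_norm, ← Real.rpow_le_rpow_iff (taylorRem_div_derivNorm_nonneg q (f i) p)
      (taylorWeight_nonneg p) hq0, taylorWeight_rpow hq0.ne']
    exact Finset.single_le_sum
      (f := fun i ↦ (‖taylorRem (f i) p.1 p.2‖ / derivNorm q (f i)) ^ q)
      (fun j _ ↦ Real.rpow_nonneg (taylorRem_div_derivNorm_nonneg q (f j) p) q) (Finset.mem_univ i)

lemma measurable_taylorWeight (hf : ∀ i, IsSobolevLoop q (f i)) :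
    Measurable (taylorWeight q f) := by
  have h_rem (i : ι) : Measurable fun p : ℝ × ℝ ↦ ‖taylorRem (f i) p.1 p.2‖ :=
    (stronglyMeasurable_taylorRem (hf i).contDiff).norm.measurable
  unfold taylorWeight
  fun_prop

lemma lintegral_taylorWeight_rpow_div_le (hf : ∀ i, IsSobolevLoop q (f i)) (hq : 1 ≤ q) :
    ∫⁻ p in unitSq, ENNReal.ofReal (taylorWeight q f p ^ q / circDist p.1 p.2 ^ (2 * q)) ≤
      Fintype.card ι := by
  have h_rem (i : ι) : Measurable fun p : ℝ × ℝ ↦ ‖taylorRem (f i) p.1 p.2‖ :=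
    (stronglyMeasurable_taylorRem (hf i).contDiff).norm.measurable
  have term_nonneg (i : ι) (p : ℝ × ℝ) :
      0 ≤ (‖taylorRem (f i) p.1 p.2‖ / derivNorm q (f i)) ^ q / circDist p.1 p.2 ^ (2 * q) :=
    div_nonneg (Real.rpow_nonneg (taylorRem_div_derivNorm_nonneg q (f i) p) q)
      (Real.rpow_nonneg (circDist_nonneg _ _) _)
  simp only [taylorWeight_rpow (show q ≠ 0 by linarith), Finset.sum_div,
    ENNReal.ofReal_sum_of_nonneg fun i _ ↦ term_nonneg i _]
  rw [lintegral_finsetSum _ fun i _ ↦ by fun_prop]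
  refine (Finset.sum_le_sum fun i _ ↦ (hf i).lintegral_taylorRem_div_derivNorm_le hq).trans ?_
  simp

lemma integrableOn_taylorWeight_rpow_div (hf : ∀ i, IsSobolevLoop q (f i)) (hq : 1 ≤ q) :
    IntegrableOn (fun p : ℝ × ℝ ↦ taylorWeight q f p ^ q / circDist p.1 p.2 ^ (2 * q)) unitSq := by
  have h_weight := measurable_taylorWeight hf
  refine ⟨Measurable.aestronglyMeasurable (by fun_prop), ?_⟩
  rw [hasFiniteIntegral_iff_ofReal (ae_of_all _ fun p ↦ div_nonneg
    (Real.rpow_nonneg (taylorWeight_nonneg p) q) (Real.rpow_nonneg (circDist_nonneg _ _) _))]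
  exact (lintegral_taylorWeight_rpow_div_le hf hq).trans_lt (ENNReal.natCast_lt_top _)

lemma setIntegral_taylorWeight_rpow_div_le (hf : ∀ i, IsSobolevLoop q (f i)) (hq : 1 ≤ q) :
    ∫ p in unitSq, taylorWeight q f p ^ q / circDist p.1 p.2 ^ (2 * q) ≤ Fintype.card ι := by
  rw [integral_eq_lintegral_of_nonneg_ae (ae_of_all _ fun p ↦ div_nonneg
    (Real.rpow_nonneg (taylorWeight_nonneg p) q) (Real.rpow_nonneg (circDist_nonneg _ _) _))
    (integrableOn_taylorWeight_rpow_div hf hq).aestronglyMeasurable]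
  simpa using ENNReal.toReal_mono (ENNReal.natCast_ne_top _)
    (lintegral_taylorWeight_rpow_div_le hf hq)

end TaylorWeight

section CurveJet

variable {n : ℕ} {q : ℝ} {f g : ℝ → EuclideanSpace ℝ (Fin n)}

/-- The jet of a curve at a pair of parameters: the tangent vector at the second one, the Taylor
remainder and the chord. -/
def curveJet (f : ℝ → EuclideanSpace ℝ (Fin n)) (p : ℝ × ℝ) :
    EuclideanSpace ℝ (Fin n) × EuclideanSpace ℝ (Fin n) × EuclideanSpace ℝ (Fin n) :=
  (deriv f p.2, taylorRem f p.1 p.2, f p.1 - f p.2)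

lemma measurable_curveJet (hf : ContDiff ℝ 1 f) : Measurable (curveJet f) := by
  have h_tangent : Continuous fun p : ℝ × ℝ ↦ deriv f p.2 :=
    (hf.continuous_deriv le_rfl).comp continuous_snd
  have h_chord : Continuous fun p : ℝ × ℝ ↦ f p.1 - f p.2 := by fun_prop
  exact h_tangent.measurable.prodMk
    ((stronglyMeasurable_taylorRem hf).measurable.prodMk h_chord.measurable)

lemma curveJet_add_smul (hf : Differentiable ℝ f) (hg : Differentiable ℝ g) (s : ℝ) (p : ℝ × ℝ) :
    curveJet (fun x ↦ f x + s • g x) p = curveJet f p + s • curveJet g p := by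
  have h_deriv (y : ℝ) : deriv (fun x ↦ f x + s • g x) y = deriv f y + s • deriv g y := by
    rw [deriv_fun_add (hf y) ((hg y).fun_const_smul s), deriv_fun_const_smul s (hg y)]
  simp only [curveJet, taylorRem, h_deriv, Prod.smul_mk, Prod.mk_add_mk, Prod.mk.injEq, true_and]
  constructor <;> module

lemma wedge_deriv_sub_eq_wedge_taylorRem (f : ℝ → EuclideanSpace ℝ (Fin n)) (x y : ℝ) :
    wedge n (deriv f y) (f x - f y) = wedge n (deriv f y) (taylorRem f x y) := by
  rw [taylorRem, map_sub _ (f x - f y), map_smul, wedge_self, smul_zero, sub_zero]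

lemma jetDensity_curveJet (q : ℝ) (f : ℝ → EuclideanSpace ℝ (Fin n)) (p : ℝ × ℝ) :
    jetDensity q (2 * q) (wedge n) (curveJet f p) =
      wedgeSq (deriv f p.2) (f p.1 - f p.2) ^ (q / 2) / ‖f p.1 - f p.2‖ ^ (2 * q) := by
  rw [← norm_wedge_sq, wedge_deriv_sub_eq_wedge_taylorRem, ← Real.rpow_natCast,
    ← Real.rpow_mul (norm_nonneg _), Nat.cast_ofNat, mul_div_cancel₀ q two_ne_zero, div_eq_mul_inv,
    ← Real.rpow_neg (norm_nonneg _)]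
  rfl

lemma TPr_eq_setIntegral_jetDensity (hq : 0 ≤ q) (hf : ContDiff ℝ 1 f) :
    TPr q f = 1 / q * ∫ p in unitSq, jetDensity q (2 * q) (wedge n) (curveJet f p) := by
  rw [TPr, TPe, ENNReal.toReal_mul, ENNReal.toReal_ofReal (by positivity)]
  simp only [← jetDensity_curveJet]
  rw [integral_eq_lintegral_of_nonneg_ae (ae_of_all _ fun p ↦ ?_)
    (measurable_jetDensity (measurable_curveJet hf)).aestronglyMeasurable]
  rw [Pi.zero_apply, jetDensity]
  positivity

end CurveJet

section Scales

variable {n : ℕ} {q ρ : ℝ} {u v : ℝ → EuclideanSpace ℝ (Fin n)} {p : ℝ × ℝ}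

lemma jetBound_curveJet (hu : IsSobolevLoop q u) (hq : 2 < q) (hbil : bil u < ⊤)
    (hp : 0 < circDist p.1 p.2) (hρ : ‖taylorRem u p.1 p.2‖ ≤ derivNorm q u * ρ) :
    JetBound (linfD u).toReal (derivNorm q u * ρ) (circDist p.1 p.2 / (bil u).toReal)
      (curveJet u p) := by
  have bil_pos := bil_toReal_pos hu.differentiable hbil
  exact ⟨hu.norm_deriv_le_linfD hq p.2, hρ, div_pos hp bil_pos,
    (div_le_iff₀' bil_pos).2 (circDist_le_bil_mul hbil p.1 p.2)⟩

lemma jetVariation_curveJet (hu : IsSobolevLoop q u) (hv : IsSobolevLoop q v) (hq : 2 < q)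
    (hbil : bil u < ⊤) (hρ₀ : 0 ≤ ρ) (hρ : ‖taylorRem v p.1 p.2‖ ≤ derivNorm q v * ρ) :
    JetVariation ((bil u).toReal * (morreyConst q * derivNorm q v)) (linfD u).toReal
      (derivNorm q u * ρ) (circDist p.1 p.2 / (bil u).toReal) (curveJet v p) := by
  have bil_pos := bil_toReal_pos hu.differentiable hbil
  have norm_u := derivNorm_nonneg q u
  have norm_v := derivNorm_nonneg q v
  have one_le_const := one_le_morreyConst hq
  have h_deriv := hv.norm_deriv_le_morreyConst_mul hq
  refine ⟨?_, ?_, ?_⟩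
  · calc ‖deriv v p.2‖ ≤ 1 * (morreyConst q * derivNorm q v) := by simpa using h_deriv p.2
      _ ≤ (bil u).toReal * (linfD u).toReal * (morreyConst q * derivNorm q v) := by
          gcongr
          exact hu.one_le_bil_mul_linfD hq hbil
      _ = _ := by ring
  · calc ‖taylorRem v p.1 p.2‖ ≤ 1 * (1 * derivNorm q v) * ρ := by simpa using hρ
      _ ≤ (bil u).toReal * derivNorm q u * (morreyConst q * derivNorm q v) * ρ := by
          gcongr
          exact hu.one_le_bil_mul_derivNorm (by linarith) hbil
      _ = _ := by ring
  · refine (norm_sub_le_mul_circDist hv.differentiable hv.periodic h_deriv p.1 p.2).trans_eq ?_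
    field_simp

lemma jetWeight_scales_eq {L N b d : ℝ} (hL : 0 ≤ L) (hN : 0 ≤ N) (hb : 0 ≤ b) (hd : 0 ≤ d)
    (hρ : 0 ≤ ρ) (q : ℝ) :
    jetWeight q (2 * q) L (N * ρ) (d / b) =
      L ^ q * N ^ q * b ^ (2 * q) * (ρ ^ q / d ^ (2 * q)) := by
  rw [jetWeight, Real.mul_rpow hL (by positivity), Real.mul_rpow hN hρ, Real.div_rpow hd hb,
    Real.rpow_neg hd, Real.rpow_neg hb, div_inv_eq_mul]
  ring

lemma rpow_mul_rpow_le_rpow_add_mul_rpow_add {b L r : ℝ} (hb : 0 ≤ b) (hbL : 1 ≤ b * L)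
    (hr : 0 ≤ r) (s t : ℝ) : b ^ s * L ^ t ≤ b ^ (s + r) * L ^ (t + r) := by
  have h_pos : 0 < b * L := one_pos.trans_le hbL
  have hL : 0 < L := pos_of_mul_pos_right h_pos hb
  have hb : 0 < b := pos_of_mul_pos_left h_pos hL.le
  calc b ^ s * L ^ t ≤ b ^ s * L ^ t * (b * L) ^ r :=
        le_mul_of_one_le_right (by positivity) (Real.one_le_rpow hbL hr)
    _ = b ^ (s + r) * L ^ (t + r) := by
        rw [Real.mul_rpow hb.le hL.le, Real.rpow_add hb, Real.rpow_add hL, mul_mul_mul_comm]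

end Scales

section Variations

variable {n : ℕ} {q : ℝ} {u v w : ℝ → EuclideanSpace ℝ (Fin n)}

/-- The derivative of `TPr q` at `u` in the direction `w`. -/
def firstVariation (q : ℝ) (u w : ℝ → EuclideanSpace ℝ (Fin n)) : ℝ :=
  1 / q * ∫ p in unitSq, jetDensityDeriv q (2 * q) (wedge n) (curveJet u p) (curveJet w p)

/-- The derivative of `u ↦ firstVariation q u w` in the direction `v`. -/
def secondVariation (q : ℝ) (u v w : ℝ → EuclideanSpace ℝ (Fin n)) : ℝ :=
  1 / q * ∫ p in unitSq,
    jetDensityDeriv₂ q (2 * q) (wedge n) (curveJet u p) (curveJet v p) (curveJet w p)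

/-- The size of the tangent-point density of `u` at a pair of parameters, with Taylor remainders
controlled by the common weight of `u`, `v` and `w`. -/
def variationWeight (q : ℝ) (u v w : ℝ → EuclideanSpace ℝ (Fin n)) (p : ℝ × ℝ) : ℝ :=
  jetWeight q (2 * q) (linfD u).toReal (derivNorm q u * taylorWeight q ![u, v, w] p)
    (circDist p.1 p.2 / (bil u).toReal)

lemma forall_isSobolevLoop (hu : IsSobolevLoop q u) (hv : IsSobolevLoop q v)
    (hw : IsSobolevLoop q w) (i : Fin 3) : IsSobolevLoop q (![u, v, w] i) := by
  fin_cases i <;> assumption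

lemma variationWeight_eq (q : ℝ) (u v w : ℝ → EuclideanSpace ℝ (Fin n)) (p : ℝ × ℝ) :
    variationWeight q u v w p =
      (linfD u).toReal ^ q * derivNorm q u ^ q * (bil u).toReal ^ (2 * q) *
        (taylorWeight q ![u, v, w] p ^ q / circDist p.1 p.2 ^ (2 * q)) :=
  jetWeight_scales_eq ENNReal.toReal_nonneg (derivNorm_nonneg q u) ENNReal.toReal_nonneg
    (circDist_nonneg _ _) (taylorWeight_nonneg p) q

lemma integrableOn_variationWeight (hu : IsSobolevLoop q u) (hv : IsSobolevLoop q v)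
    (hw : IsSobolevLoop q w) (hq : 1 ≤ q) : IntegrableOn (variationWeight q u v w) unitSq := by
  rw [funext (variationWeight_eq q u v w)]
  exact (integrableOn_taylorWeight_rpow_div (forall_isSobolevLoop hu hv hw) hq).const_mul _

lemma setIntegral_variationWeight_le (hu : IsSobolevLoop q u) (hv : IsSobolevLoop q v)
    (hw : IsSobolevLoop q w) (hq : 1 ≤ q) :
    ∫ p in unitSq, variationWeight q u v w p ≤
      (linfD u).toReal ^ q * derivNorm q u ^ q * (bil u).toReal ^ (2 * q) * 3 := by
  have := derivNorm_nonneg q u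
  simp only [variationWeight_eq]
  rw [integral_const_mul]
  gcongr
  simpa using setIntegral_taylorWeight_rpow_div_le (forall_isSobolevLoop hu hv hw) hq

lemma ae_jetBound (hu : IsSobolevLoop q u) (hv : IsSobolevLoop q v) (hw : IsSobolevLoop q w)
    (hq : 2 < q) (hbil : bil u < ⊤) :
    ∀ᵐ p ∂volume.restrict unitSq, JetBound (linfD u).toReal
      (derivNorm q u * taylorWeight q ![u, v, w] p) (circDist p.1 p.2 / (bil u).toReal)
      (curveJet u p) := by
  filter_upwards [ae_restrict_of_ae ae_circDist_pos] with p hp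
  exact jetBound_curveJet hu hq hbil hp
    (norm_taylorRem_le_mul_taylorWeight (forall_isSobolevLoop hu hv hw) hq 0 p)

lemma ae_jetVariation (hu : IsSobolevLoop q u) (hv : IsSobolevLoop q v) (hw : IsSobolevLoop q w)
    (hq : 2 < q) (hbil : bil u < ⊤) (i : Fin 3) :
    ∀ᵐ p ∂volume.restrict unitSq,
      JetVariation ((bil u).toReal * (morreyConst q * derivNorm q (![u, v, w] i)))
        (linfD u).toReal (derivNorm q u * taylorWeight q ![u, v, w] p)
        (circDist p.1 p.2 / (bil u).toReal) (curveJet (![u, v, w] i) p) :=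
  ae_of_all _ fun p ↦ jetVariation_curveJet hu (forall_isSobolevLoop hu hv hw i) hq hbil
    (taylorWeight_nonneg p)
    (norm_taylorRem_le_mul_taylorWeight (forall_isSobolevLoop hu hv hw) hq i p)

lemma eventually_hasDerivAt_TPr (hu : IsSobolevLoop q u) (hv : IsSobolevLoop q v)
    (hw : IsSobolevLoop q w) (hq : 2 < q) (hbil : bil u < ⊤) :
    ∀ᶠ s in 𝓝 (0 : ℝ), HasDerivAt (fun t : ℝ ↦ TPr q (fun x ↦ u x + s • v x + t • w x))
      (firstVariation q (fun x ↦ u x + s • v x) w) 0 := by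
  filter_upwards [eventually_hasDerivAt_integral_jetDensity norm_wedge_le (by linarith)
    (by linarith) (measurable_curveJet hu.contDiff) (measurable_curveJet hv.contDiff)
    (measurable_curveJet hw.contDiff) (ae_jetBound hu hv hw hq hbil)
    (ae_jetVariation hu hv hw hq hbil 1) (ae_jetVariation hu hv hw hq hbil 2)
    (integrableOn_variationWeight hu hv hw (by linarith))] with s hs
  have huv : ContDiff ℝ 1 fun x ↦ u x + s • v x := hu.contDiff.add (hv.contDiff.const_smul s)
  have TPr_eq (t : ℝ) : TPr q (fun x ↦ u x + s • v x + t • w x) = 1 / q * ∫ p in unitSq,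
      jetDensity q (2 * q) (wedge n) (curveJet u p + s • curveJet v p + t • curveJet w p) := by
    rw [TPr_eq_setIntegral_jetDensity (by linarith) (huv.add (hw.contDiff.const_smul t))]
    simp only [curveJet_add_smul (huv.differentiable one_ne_zero) hw.differentiable,
      curveJet_add_smul hu.differentiable hv.differentiable]
  simp only [TPr_eq, firstVariation, curveJet_add_smul hu.differentiable hv.differentiable]
  exact hs.const_mul (1 / q)

lemma hasDerivAt_firstVariation (hu : IsSobolevLoop q u) (hv : IsSobolevLoop q v)
    (hw : IsSobolevLoop q w) (hq : 2 < q) (hbil : bil u < ⊤) :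
    HasDerivAt (fun s : ℝ ↦ firstVariation q (fun x ↦ u x + s • v x) w)
      (secondVariation q u v w) 0 := by
  simp only [firstVariation, curveJet_add_smul hu.differentiable hv.differentiable]
  exact (hasDerivAt_integral_jetDensityDeriv norm_wedge_le hq (by linarith)
    (measurable_curveJet hu.contDiff) (measurable_curveJet hv.contDiff)
    (measurable_curveJet hw.contDiff) (ae_jetBound hu hv hw hq hbil)
    (ae_jetVariation hu hv hw hq hbil 1) (ae_jetVariation hu hv hw hq hbil 2)
    (integrableOn_variationWeight hu hv hw (by linarith))).const_mul (1 / q)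

lemma abs_secondVariation_le (hu : IsSobolevLoop q u) (hv : IsSobolevLoop q v)
    (hw : IsSobolevLoop q w) (hq : 2 < q) (hbil : bil u < ⊤) :
    |secondVariation q u v w| ≤ 3 * (16 * q + 4) * morreyConst q ^ 2 *
      ((bil u).toReal ^ (2 * q + 2) * (linfD u).toReal ^ q) * derivNorm q u ^ q *
      derivNorm q v * derivNorm q w := by
  have := derivNorm_nonneg q v
  have := derivNorm_nonneg q w
  have bil_rpow : (bil u).toReal ^ (2 * q + 2) = (bil u).toReal ^ (2 * q) * (bil u).toReal ^ 2 := by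
    rw [Real.rpow_add (bil_toReal_pos hu.differentiable hbil), Real.rpow_two]
  rw [secondVariation, abs_mul, abs_of_nonneg (by positivity), bil_rpow]
  calc _ ≤ 1 / q * ((4 * q * (q - 1) + 2 * q + 4 * q * (2 * q) + 2 * q * (2 * q + 3)) *
        ((bil u).toReal * (morreyConst q * derivNorm q v) *
          ((bil u).toReal * (morreyConst q * derivNorm q w))) *
        ∫ p in unitSq, variationWeight q u v w p) := by
        gcongr
        exact abs_integral_jetDensityDeriv₂_le norm_wedge_le hq.le (by linarith)
          (ae_jetBound hu hv hw hq hbil) (ae_jetVariation hu hv hw hq hbil 1)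
          (ae_jetVariation hu hv hw hq hbil 2)
          (integrableOn_variationWeight hu hv hw (by linarith))
    _ ≤ 1 / q * ((4 * q * (q - 1) + 2 * q + 4 * q * (2 * q) + 2 * q * (2 * q + 3)) *
        ((bil u).toReal * (morreyConst q * derivNorm q v) *
          ((bil u).toReal * (morreyConst q * derivNorm q w))) *
        ((linfD u).toReal ^ q * derivNorm q u ^ q * (bil u).toReal ^ (2 * q) * 3)) := by
        have := one_le_morreyConst hq
        have : 0 ≤ q - 1 := by linarith
        gcongr
        exact setIntegral_variationWeight_le hu hv hw (by linarith)
    _ = _ := by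
        field_simp
        ring

end Variations

/-- Proposition 3.10, second variation: the mixed second partial
derivative `δ²TP(u)[v,w] = ∂²/∂s∂t TP(u + s v + t w)|_{(0,0)}` exists and satisfies
`|δ²TP(u)[v,w]| ≤ C (bil u)^{2q+4} ‖u'‖_{L^∞}^{q+2} ‖u'‖_{W^{1-1/q,q}}^q
‖v'‖_{W^{1-1/q,q}} ‖w'‖_{W^{1-1/q,q}}` with `C = C(n, q)`. -/
theorem second_variation_estimate (n : ℕ) (q : ℝ) (hq : 2 < q) :
    ∃ C : ℝ, 0 < C ∧ ∀ u v w : ℝ → EuclideanSpace ℝ (Fin n),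
      ContDiff ℝ 1 u → Function.Periodic u 1 → Embedded u → Regular u →
      bil u < ⊤ → sobSemPow (1 - 1 / q) q (deriv u) < ⊤ →
      ContDiff ℝ 1 v → Function.Periodic v 1 →
      sobSemPow (1 - 1 / q) q (deriv v) < ⊤ →
      ContDiff ℝ 1 w → Function.Periodic w 1 →
      sobSemPow (1 - 1 / q) q (deriv w) < ⊤ →
      ∃ (D : ℝ → ℝ) (d2 : ℝ),
        (∀ᶠ s in nhds (0 : ℝ),
          HasDerivAt (fun t : ℝ => TPr q (fun x => u x + s • v x + t • w x)) (D s) 0) ∧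
        HasDerivAt D d2 0 ∧
        |d2| ≤ C * (bil u).toReal ^ (2 * q + 4) * (linfD u).toReal ^ (q + 2) *
          Wnorm (1 - 1 / q) q (deriv u) ^ q *
          Wnorm (1 - 1 / q) q (deriv v) * Wnorm (1 - 1 / q) q (deriv w) := by
  have const_ge := one_le_morreyConst hq
  refine ⟨3 * (16 * q + 4) * morreyConst q ^ 2, by positivity, ?_⟩
  intro u v w hu hu_per _ _ hbil hu_sob hv hv_per hv_sob hw hw_per hw_sob
  have u_loop : IsSobolevLoop q u := ⟨hu, hu_per, hu_sob⟩
  have v_loop : IsSobolevLoop q v := ⟨hv, hv_per, hv_sob⟩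
  have w_loop : IsSobolevLoop q w := ⟨hw, hw_per, hw_sob⟩
  refine ⟨fun s ↦ firstVariation q (fun x ↦ u x + s • v x) w, secondVariation q u v w,
    eventually_hasDerivAt_TPr u_loop v_loop w_loop hq hbil,
    hasDerivAt_firstVariation u_loop v_loop w_loop hq hbil,
    (abs_secondVariation_le u_loop v_loop w_loop hq hbil).trans ?_⟩
  have scale_le := rpow_mul_rpow_le_rpow_add_mul_rpow_add ENNReal.toReal_nonneg
    (u_loop.one_le_bil_mul_linfD hq hbil) zero_le_two (2 * q + 2) q
  rw [show 2 * q + 2 + 2 = 2 * q + 4 by ring] at scale_le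
  have u_norm := Wnorm_nonneg (1 - 1 / q) q (deriv u)
  have v_norm := Wnorm_nonneg (1 - 1 / q) q (deriv v)
  have w_norm := Wnorm_nonneg (1 - 1 / q) q (deriv w)
  rw [derivNorm, derivNorm, derivNorm, mul_assoc (_ * _) (_ ^ (2 * q + 4))]
  gcongr
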